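/- arXiv:1104.0219 — 2 statements merged into one kernel-verified Lean document; each statement's English description precedes it below -/
import Mathlib

section
/- Every finite connected simple graph G is the neighbourhood graph of some connected partition of ℝ³ by regular closed polyhedra: there exist nonempty regular closed polyhedral sets X_v (v a vertex of G) with connected, pairwise disjoint interiors summing to ℝ³, such that for distinct vertices u, v, the interior of X_u ∪ X_v is connected if and only if {u,v} is an edge of G. -/
/-- Membership in the Boolean subalgebra of `RC(ℝ³)` generated by closed half-spaces:
regular closed polyhedra. -/
inductive IsPolyhedron3 : Set (Fin 3 → ℝ) → Prop
  | halfspace (a : Fin 3 → ℝ) (c : ℝ) (ha : a ≠ 0) :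
      IsPolyhedron3 {x | ∑ i, a i * x i ≤ c}
  | sup (X Y : Set (Fin 3 → ℝ)) : IsPolyhedron3 X → IsPolyhedron3 Y → IsPolyhedron3 (X ∪ Y)
  | inf (X Y : Set (Fin 3 → ℝ)) : IsPolyhedron3 X → IsPolyhedron3 Y →
      IsPolyhedron3 (closure (interior (X ∩ Y)))
  | compl (X : Set (Fin 3 → ℝ)) : IsPolyhedron3 X → IsPolyhedron3 (closure Xᶜ)

/-!
Take a walk `w 0, …, w m` in the graph that traverses every edge, and stack `m + 1` horizontal
slabs on top of each other, the `k`-th one labelled `w k`. If every set `X v` is the union of the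
slabs labelled `v`, then exactly the pairs `w k, w (k + 1)` share a horizontal face, and these are
the edges of the graph; but the interior of `X v` need not be connected. To repair this, over a
small part of the plane reserved for `k`, all slabs strictly between the slab `k` and the first slab
with the same label are squeezed to thickness zero, so that these two meet. Every slab remains
connected, and no vertical line sees a new pair of neighbouring labels.

That vertical lines suffice to detect contact between `X u` and `X v` is again a connectedness
argument: near a point interior to the union, the base points whose line meets the interior of
`X u`, and those whose line meets the interior of `X v`, form open sets covering a connected
neighbourhood, so some line meets both.
-/

open Set Topology

namespace NeighbourhoodGraph

section Contact

variable {α : Type*} [TopologicalSpace α]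

/-- Two sets are in contact when they share a point interior to their union. For regular closed
sets with connected interiors this says that the interior of the union is connected. -/
def Contact (X Y : Set α) : Prop := (X ∩ Y ∩ interior (X ∪ Y)).Nonempty

lemma Contact.mono {X X' Y Y' : Set α} (h : Contact X Y) (hX : X ⊆ X') (hY : Y ⊆ Y') :
    Contact X' Y' :=
  Set.Nonempty.mono
    (inter_subset_inter (inter_subset_inter hX hY) (interior_mono (union_subset_union hX hY))) h

lemma closure_interior_closure_of_isOpen {U : Set α} (hU : IsOpen U) :
    closure (interior (closure U)) = closure U := by
  simpa only [hU.interior_eq] using closure_interior_idem (s := U)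

lemma isPreconnected_interior_closure {U : Set α} (hU : IsOpen U) (hc : IsPreconnected U) :
    IsPreconnected (interior (closure U)) :=
  hc.subset_closure (interior_maximal subset_closure hU) interior_subset

lemma disjoint_interior_closure {U V : Set α} (hU : IsOpen U) (h : Disjoint U V) :
    Disjoint (interior (closure U)) (interior (closure V)) :=
  (((h.closure_right hU).mono_right interior_subset).closure_left isOpen_interior).mono_left
    interior_subset

lemma isPreconnected_interior_union_of_contact {X Y : Set α} (hX : X = closure (interior X))
    (hY : Y = closure (interior Y)) (hXc : IsPreconnected (interior X))
    (hYc : IsPreconnected (interior Y)) (h : Contact X Y) :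
    IsPreconnected (interior (X ∪ Y)) := by
  obtain ⟨p, ⟨hpX, hpY⟩, hp⟩ := h
  rw [hX] at hpX
  rw [hY] at hpY
  have hXp : IsPreconnected (insert p (interior X)) :=
    hXc.subset_closure (subset_insert _ _) (insert_subset hpX subset_closure)
  have hYp : IsPreconnected (insert p (interior Y)) :=
    hYc.subset_closure (subset_insert _ _) (insert_subset hpY subset_closure)
  refine (hXp.union p (mem_insert _ _) (mem_insert _ _) hYp).subset_closure ?_ ?_
  · exact union_subset (insert_subset hp (interior_mono subset_union_left))
      (insert_subset hp (interior_mono subset_union_right))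
  · refine interior_subset.trans (union_subset ?_ ?_)
    · exact hX.subset.trans
        (closure_mono ((subset_insert _ _).trans subset_union_left))
    · exact hY.subset.trans
        (closure_mono ((subset_insert _ _).trans subset_union_right))

lemma isConnected_interior_union_iff_contact {X Y : Set α} (hX : X = closure (interior X))
    (hY : Y = closure (interior Y)) (hXc : IsConnected (interior X))
    (hYc : IsConnected (interior Y)) :
    IsConnected (interior (X ∪ Y)) ↔ Contact X Y := by
  refine ⟨fun h => ?_, fun h => ⟨hXc.nonempty.mono (interior_mono subset_union_left),
    isPreconnected_interior_union_of_contact hX hY hXc.isPreconnected hYc.isPreconnected h⟩⟩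
  have hmeet := isPreconnected_closed_iff.1 h.isPreconnected X Y (hX ▸ isClosed_closure)
    (hY ▸ isClosed_closure) interior_subset
    (hXc.nonempty.mono fun p hp => ⟨interior_mono subset_union_left hp, interior_subset hp⟩)
    (hYc.nonempty.mono fun p hp => ⟨interior_mono subset_union_right hp, interior_subset hp⟩)
  rwa [inter_comm] at hmeet

lemma isConnected_interior_closure_biUnion {ι : Type*} {s : Set ι} {L : ι → Set α} {r : ι}
    (hL : ∀ i ∈ s, IsOpen (L i)) (hr : r ∈ s) (hne : (L r).Nonempty)
    (h : ∀ i ∈ s, IsPreconnected (interior (closure (L r) ∪ closure (L i)))) :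
    IsConnected (interior (closure (⋃ i ∈ s, L i))) := by
  have hsub : ∀ i ∈ s, closure (L i) ⊆ closure (⋃ i ∈ s, L i) := fun i hi =>
    closure_mono (subset_biUnion_of_mem hi)
  obtain ⟨p, hp⟩ := hne
  have hpr : ∀ i, p ∈ interior (closure (L r) ∪ closure (L i)) := fun i =>
    interior_maximal (subset_closure.trans subset_union_left) (hL r hr) hp
  have hpre : IsPreconnected (⋃ i ∈ s, interior (closure (L r) ∪ closure (L i))) := by
    rw [biUnion_eq_iUnion]
    exact isPreconnected_iUnion ⟨p, mem_iInter.2 fun i => hpr i⟩ fun i => h i i.2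
  refine ⟨⟨p, interior_mono (union_subset (hsub r hr) (hsub r hr)) (hpr r)⟩,
    hpre.subset_closure ?_ (interior_subset.trans (closure_mono ?_))⟩
  · exact iUnion₂_subset fun i hi => interior_mono (union_subset (hsub r hr) (hsub i hi))
  · exact iUnion₂_mono fun i hi =>
      interior_maximal (subset_closure.trans subset_union_right) (hL i hi)

end Contact

lemma isPreconnected_of_isOpen_of_fibers {α β : Type*} [TopologicalSpace α] [TopologicalSpace β]
    {A : Set (α × β)} (hA : IsOpen A) (hbase : IsPreconnected (Prod.fst '' A))
    (hfib : ∀ q, IsPreconnected {z | (q, z) ∈ A}) : IsPreconnected A := by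
  intro U V hU hV hcov hAU hAV
  have hproj : Prod.fst '' A ⊆ Prod.fst '' (A ∩ U) ∪ Prod.fst '' (A ∩ V) := by
    rw [← image_union, ← inter_union_distrib_left]
    exact image_mono (subset_inter subset_rfl hcov)
  obtain ⟨q, -, ⟨⟨_, z₁⟩, hz₁, rfl⟩, ⟨⟨q, z₂⟩, hz₂, rfl⟩⟩ := hbase _ _
    (isOpenMap_fst _ (hA.inter hU)) (isOpenMap_fst _ (hA.inter hV)) hproj
    ((hAU.image _).mono (subset_inter (image_mono inter_subset_left) subset_rfl))
    ((hAV.image _).mono (subset_inter (image_mono inter_subset_left) subset_rfl))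
  obtain ⟨z, hz⟩ := hfib q (Prod.mk q ⁻¹' U) (Prod.mk q ⁻¹' V) (hU.preimage (by fun_prop))
    (hV.preimage (by fun_prop)) (fun z hz => hcov hz) ⟨z₁, hz₁⟩ ⟨z₂, hz₂⟩
  exact ⟨(q, z), hz⟩

section Epigraph

variable {B : Type*} [TopologicalSpace B] {t : B → EReal}

lemma isOpen_lt_snd (ht : Continuous t) : IsOpen {p : B × ℝ | t p.1 < p.2} :=
  isOpen_lt (ht.comp continuous_fst) (continuous_coe_real_ereal.comp continuous_snd)

lemma isOpen_snd_lt (ht : Continuous t) : IsOpen {p : B × ℝ | p.2 < t p.1} :=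
  isOpen_lt (continuous_coe_real_ereal.comp continuous_snd) (ht.comp continuous_fst)

lemma closure_lt_snd (ht : Continuous t) :
    closure {p : B × ℝ | t p.1 < p.2} = {p : B × ℝ | t p.1 ≤ p.2} := by
  apply subset_antisymm
  · exact closure_minimal (fun p hp => (show t p.1 < p.2 from hp).le)
      (isClosed_le (ht.comp continuous_fst) (continuous_coe_real_ereal.comp continuous_snd))
  · rintro ⟨q, z⟩ hz
    refine map_mem_closure (f := Prod.mk q) (s := Ioi z) (by fun_prop) (by simp) fun z' hz' => ?_
    exact lt_of_le_of_lt hz (EReal.coe_lt_coe hz')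

lemma closure_snd_lt (ht : Continuous t) :
    closure {p : B × ℝ | p.2 < t p.1} = {p : B × ℝ | p.2 ≤ t p.1} := by
  apply subset_antisymm
  · exact closure_minimal (fun p hp => (show p.2 < t p.1 from hp).le)
      (isClosed_le (continuous_coe_real_ereal.comp continuous_snd) (ht.comp continuous_fst))
  · rintro ⟨q, z⟩ hz
    refine map_mem_closure (f := Prod.mk q) (s := Iio z) (by fun_prop) (by simp) fun z' hz' => ?_
    exact lt_of_lt_of_le (EReal.coe_lt_coe hz') hz

lemma interior_le_snd (ht : Continuous t) :
    interior {p : B × ℝ | t p.1 ≤ p.2} = {p : B × ℝ | t p.1 < p.2} := by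
  rw [← compl_compl {p : B × ℝ | t p.1 ≤ p.2}, interior_compl]
  simp only [compl_ofPred, not_le, closure_snd_lt ht]

lemma interior_snd_le (ht : Continuous t) :
    interior {p : B × ℝ | p.2 ≤ t p.1} = {p : B × ℝ | p.2 < t p.1} := by
  rw [← compl_compl {p : B × ℝ | p.2 ≤ t p.1}, interior_compl]
  simp only [compl_ofPred, not_le, closure_lt_snd ht]

end Epigraph

lemma exists_and_not_succ {P : ℕ → Prop} {k l : ℕ} (hkl : k ≤ l) (hk : P k) (hl : ¬ P l) :
    ∃ i, k ≤ i ∧ P i ∧ ¬ P (i + 1) := by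
  obtain ⟨n, hn, hn'⟩ := Nat.exists_not_and_succ_of_not_zero_of_exists
    (p := fun n => ¬ P (k + n)) (not_not.2 hk) ⟨l - k, by rwa [Nat.add_sub_cancel' hkl]⟩
  exact ⟨k + n, k.le_add_right n, not_not.1 hn, hn'⟩

lemma exists_consecutive_jumps_of_monotone {γ : Type*} [LinearOrder γ] {t : ℕ → γ}
    (ht : Monotone t) {P : ℕ → Prop} {k l : ℕ} (hkl : k < l) (hk : t k < t (k + 1))
    (hl : t l < t (l + 1)) (hPk : P k) (hPl : ¬ P l) :
    ∃ i j, k ≤ i ∧ i < j ∧ j ≤ l ∧ t i < t (i + 1) ∧ t (i + 1) = t j ∧ t j < t (j + 1) ∧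
      P i ∧ ¬ P j := by
  classical
  have hex : ∃ j, k < j ∧ t j < t (j + 1) ∧ ¬ P j := ⟨l, hkl, hl, hPl⟩
  obtain ⟨hkj, hj, hPj⟩ := Nat.find_spec hex
  have hjl : Nat.find hex ≤ l := Nat.find_min' hex ⟨hkl, hl, hPl⟩
  have hmin := fun i (hi : i < Nat.find hex) => Nat.find_min hex hi
  generalize Nat.find hex = j at *
  obtain ⟨i, hki, hi, hij⟩ := exists_and_not_succ (P := (t · < t j)) hkj.le
    (hk.trans_le (ht hkj)) (lt_irrefl _)
  have hlt : i < j := ht.reflect_lt hi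
  have heq : t (i + 1) = t j := (ht hlt).antisymm (not_lt.1 hij)
  refine ⟨i, j, hki, hlt, hjl, hi.trans_eq heq.symm, heq, hj, ?_, hPj⟩
  rcases hki.eq_or_lt with rfl | hki
  · exact hPk
  · exact not_not.1 fun hPi => hmin i hlt ⟨hki, hi.trans_eq heq.symm, hPi⟩

/-- A stack over `B`: an increasing sequence of graphs `⊥ = height 0 ≤ height 1 ≤ ⋯` cutting
every vertical line `{q} × ℝ` into open intervals, some of which may be empty. -/
structure Stack (B : Type*) [TopologicalSpace B] where
  /-- The lower boundary of the `k`-th layer, which is also the upper boundary of the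
  previous one. -/
  height : ℕ → B → EReal
  continuous_height : ∀ k, Continuous (height k)
  monotone_height : ∀ q, Monotone (height · q)
  height_zero : ∀ q, height 0 q = ⊥
  exists_lt_height : ∀ q (z : ℝ), ∃ k, z < height k q

namespace Stack

variable {B : Type*} [TopologicalSpace B] (S : Stack B)

/-- The open region between two successive graphs of the stack. -/
def layer (k : ℕ) : Set (B × ℝ) := {p | S.height k p.1 < p.2 ∧ p.2 < S.height (k + 1) p.1}

/-- The layers `k < l` follow each other on the vertical line over `q`: both are nonempty there
and all layers in between are empty. -/
structure Consecutive (q : B) (k l : ℕ) : Prop where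
  lt : k < l
  lower : S.height k q < S.height (k + 1) q
  eq : S.height (k + 1) q = S.height l q
  upper : S.height l q < S.height (l + 1) q

variable {S}

lemma isOpen_layer (k : ℕ) : IsOpen (S.layer k) :=
  (isOpen_lt_snd (S.continuous_height k)).inter (isOpen_snd_lt (S.continuous_height (k + 1)))

lemma pairwise_disjoint_layer : Pairwise (Function.onFun Disjoint S.layer) := by
  refine (pairwise_disjoint_on _).2 fun k l hkl => ?_
  refine disjoint_left.2 fun p hk hl => ?_
  exact (hk.2.trans_le (S.monotone_height p.1 hkl)).not_gt hl.1

lemma exists_mem_layer {q : B} {k : ℕ} (h : S.height k q < S.height (k + 1) q) :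
    ∃ z, (q, z) ∈ S.layer k :=
  EReal.lt_iff_exists_real_btwn.1 h

lemma height_lt_of_mem_layer {p : B × ℝ} {k : ℕ} (hp : p ∈ S.layer k) :
    S.height k p.1 < S.height (k + 1) p.1 :=
  hp.1.trans hp.2

lemma exists_height_le_lt_height (q : B) (z : ℝ) :
    ∃ k, S.height k q ≤ z ∧ z < S.height (k + 1) q := by
  obtain ⟨l, hl⟩ := S.exists_lt_height q z
  obtain ⟨k, -, hlo, hhi⟩ := exists_and_not_succ (P := (S.height · q ≤ z)) l.zero_le
    (by simp [S.height_zero]) hl.not_ge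
  exact ⟨k, hlo, not_le.1 hhi⟩

lemma mem_closure_fiber {q : B} {k : ℕ} {z : ℝ} (h : S.height k q < S.height (k + 1) q)
    (hlo : S.height k q ≤ z) (hhi : z ≤ S.height (k + 1) q) :
    z ∈ closure {z | (q, z) ∈ S.layer k} := by
  have hcl := EReal.isOpenEmbedding_coe.isOpenMap.preimage_closure_eq_closure_preimage
    continuous_coe_real_ereal (Ioo (S.height k q) (S.height (k + 1) q))
  rw [closure_Ioo h.ne] at hcl
  exact hcl.subset ⟨hlo, hhi⟩

lemma mem_closure_layer {q : B} {k : ℕ} {z : ℝ} (h : S.height k q < S.height (k + 1) q)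
    (hlo : S.height k q ≤ z) (hhi : z ≤ S.height (k + 1) q) : (q, z) ∈ closure (S.layer k) :=
  map_mem_closure (f := Prod.mk q) (by fun_prop) (mem_closure_fiber h hlo hhi) fun _ hz => hz

lemma isPreconnected_layer {k : ℕ}
    (h : IsPreconnected {q | S.height k q < S.height (k + 1) q}) : IsPreconnected (S.layer k) := by
  refine isPreconnected_of_isOpen_of_fibers (isOpen_layer k) ?_ fun q => ?_
  · convert h
    ext q
    exact ⟨by rintro ⟨p, hp, rfl⟩; exact height_lt_of_mem_layer hp,
      fun hq => (exists_mem_layer hq).imp' (Prod.mk q) fun _ hz => ⟨hz, rfl⟩⟩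
  · have : OrdConnected {z | (q, z) ∈ S.layer k} :=
      ⟨fun x hx y hy z hz => ⟨hx.1.trans_le (EReal.coe_le_coe hz.1),
        (EReal.coe_le_coe hz.2).trans_lt hy.2⟩⟩
    exact this.isPreconnected

lemma Consecutive.contact_closure_layer {q : B} {k l : ℕ} (h : S.Consecutive q k l)
    (hev : S.height (k + 1) =ᶠ[𝓝 q] S.height l) :
    Contact (closure (S.layer k)) (closure (S.layer l)) := by
  obtain ⟨O, hO, hOo, hqO⟩ := eventually_nhds_iff.1 hev
  let N : Set (B × ℝ) := {p | S.height k p.1 < p.2} ∩ {p | p.2 < S.height (l + 1) p.1} ∩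
    Prod.fst ⁻¹' O
  have hN : IsOpen N := ((isOpen_lt_snd (S.continuous_height k)).inter
    (isOpen_snd_lt (S.continuous_height (l + 1)))).inter (hOo.preimage continuous_fst)
  have hNsub : N ⊆ closure (S.layer k) ∪ closure (S.layer l) := by
    rintro ⟨q', z⟩ ⟨⟨hlo, hhi⟩, hq'⟩
    rcases le_total (z : EReal) (S.height l q') with hz | hz
    · rw [← hO q' hq'] at hz
      exact Or.inl (mem_closure_layer (hlo.trans_le hz) hlo.le hz)
    · exact Or.inr (mem_closure_layer (hz.trans_lt hhi) hz hhi.le)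
  obtain ⟨z, hz⟩ : ∃ z : ℝ, (z : EReal) = S.height l q :=
    ⟨_, EReal.coe_toReal h.upper.ne_top (h.eq ▸ h.lower.ne_bot)⟩
  have hlo : S.height k q < z := by rw [hz, ← h.eq]; exact h.lower
  have hhi : z < S.height (l + 1) q := by rw [hz]; exact h.upper
  exact ⟨(q, z), ⟨mem_closure_layer h.lower hlo.le (hz.trans h.eq.symm).le,
    mem_closure_layer h.upper hz.symm.le hhi.le⟩, interior_maximal hNsub hN ⟨⟨hlo, hhi⟩, hqO⟩⟩

section Cell

variable {V : Type*} {w : ℕ → V}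

/-- The regular closed set assembled from all layers labelled `v`. -/
def cell (S : Stack B) (w : ℕ → V) (v : V) : Set (B × ℝ) := closure (⋃ k ∈ w ⁻¹' {v}, S.layer k)

lemma layer_subset_biUnion (k : ℕ) : S.layer k ⊆ ⋃ i ∈ w ⁻¹' {w k}, S.layer i :=
  subset_biUnion_of_mem (u := S.layer) (mem_preimage.2 rfl)

lemma closure_layer_subset_cell (k : ℕ) : closure (S.layer k) ⊆ S.cell w (w k) :=
  closure_mono (layer_subset_biUnion k)

lemma isOpen_biUnion_layer (s : Set ℕ) : IsOpen (⋃ k ∈ s, S.layer k) :=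
  isOpen_biUnion fun k _ => isOpen_layer k

lemma closure_interior_cell (v : V) : closure (interior (S.cell w v)) = S.cell w v :=
  closure_interior_closure_of_isOpen (isOpen_biUnion_layer _)

lemma disjoint_biUnion_layer {u v : V} (h : u ≠ v) :
    Disjoint (⋃ k ∈ w ⁻¹' {u}, S.layer k) (⋃ k ∈ w ⁻¹' {v}, S.layer k) := by
  simp only [disjoint_iUnion_left, disjoint_iUnion_right]
  rintro k rfl l rfl
  exact pairwise_disjoint_layer fun hkl => h (congrArg w hkl)

lemma disjoint_interior_cell {u v : V} (h : u ≠ v) :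
    Disjoint (interior (S.cell w u)) (interior (S.cell w v)) :=
  disjoint_interior_closure (isOpen_biUnion_layer _) (disjoint_biUnion_layer h)

lemma iUnion_cell : ⋃ v, S.cell w v = univ := by
  refine eq_univ_of_forall fun ⟨q, z⟩ => ?_
  obtain ⟨k, hlo, hhi⟩ := S.exists_height_le_lt_height q z
  exact mem_iUnion.2 ⟨w k, closure_layer_subset_cell k
    (mem_closure_layer (hlo.trans_lt hhi) hlo hhi.le)⟩

lemma label_eq_of_mem_layer_of_mem_cell {p : B × ℝ} {k : ℕ} {v : V} (hp : p ∈ S.layer k)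
    (hv : p ∈ S.cell w v) : w k = v := by
  by_contra hne
  exact disjoint_left.1 ((disjoint_biUnion_layer hne).closure_right (isOpen_biUnion_layer _))
    (layer_subset_biUnion k hp) hv

lemma exists_consecutive_of_segment_subset {u v : V} (huv : u ≠ v) {q : B} {z₁ z₂ : ℝ} {k l : ℕ}
    (hkl : k < l) (hk : (q, z₁) ∈ S.layer k) (hl : (q, z₂) ∈ S.layer l) (hku : w k = u)
    (hlv : w l = v) (hseg : ∀ z ∈ Icc z₁ z₂, (q, z) ∈ S.cell w u ∪ S.cell w v) :
    ∃ i j, S.Consecutive q i j ∧ w i = u ∧ w j = v := by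
  obtain ⟨i, j, hki, hij, hjl, hi, heq, hj, hwi, hwj⟩ :=
    exists_consecutive_jumps_of_monotone (S.monotone_height q) (P := (w · = u)) hkl
      (height_lt_of_mem_layer hk) (height_lt_of_mem_layer hl) hku (hlv ▸ huv.symm)
  refine ⟨i, j, ⟨hij, hi, heq, hj⟩, hwi, ?_⟩
  rcases hjl.eq_or_lt with rfl | hjl
  · exact hlv
  obtain ⟨z, hz⟩ := exists_mem_layer hj
  have hz₁ : z₁ < z := EReal.coe_lt_coe_iff.1 <|
    (hk.2.trans_le (S.monotone_height q (hki.trans_lt hij))).trans hz.1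
  have hz₂ : z < z₂ := EReal.coe_lt_coe_iff.1 <|
    (hz.2.trans_le (S.monotone_height q hjl)).trans hl.1
  rcases hseg z ⟨hz₁.le, hz₂.le⟩ with h | h
  · exact absurd (label_eq_of_mem_layer_of_mem_cell hz h) hwj
  · exact label_eq_of_mem_layer_of_mem_cell hz h

lemma exists_mem_fiber_cell {u v : V} {q : B} {I : Set ℝ} (hI : IsOpen I) (hne : I.Nonempty)
    (hsub : ∀ z ∈ I, (q, z) ∈ S.cell w u ∪ S.cell w v) :
    ∃ z ∈ I, ∃ k, (q, z) ∈ S.layer k ∧ (w k = u ∨ w k = v) := by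
  obtain ⟨z₀, hz₀⟩ := hne
  obtain ⟨k, hlo, hhi⟩ := S.exists_height_le_lt_height q z₀
  obtain ⟨z, hzI, hzk⟩ :=
    mem_closure_iff.1 (mem_closure_fiber (hlo.trans_lt hhi) hlo hhi.le) I hI hz₀
  exact ⟨z, hzI, k, hzk, (hsub z hzI).imp (label_eq_of_mem_layer_of_mem_cell hzk)
    (label_eq_of_mem_layer_of_mem_cell hzk)⟩

lemma exists_fiber_meeting_layers {u v : V} {C : Set B} {I : Set ℝ} (hC : IsOpen C)
    (hCc : IsPreconnected C) (hI : IsOpen I) (hsub : C ×ˢ I ⊆ S.cell w u ∪ S.cell w v)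
    (hu : (C ×ˢ I ∩ S.cell w u).Nonempty) (hv : (C ×ˢ I ∩ S.cell w v).Nonempty) :
    ∃ q ∈ C, ∃ z₁ ∈ I, ∃ z₂ ∈ I, ∃ k l, (q, z₁) ∈ S.layer k ∧ w k = u ∧
      (q, z₂) ∈ S.layer l ∧ w l = v := by
  let E (x : V) : Set (B × ℝ) := C ×ˢ I ∩ ⋃ k ∈ w ⁻¹' {x}, S.layer k
  have hE (x : V) : IsOpen (E x) := (hC.prod hI).inter (isOpen_biUnion_layer _)
  have hne (x : V) (hx : (C ×ˢ I ∩ S.cell w x).Nonempty) : (C ∩ Prod.fst '' E x).Nonempty := by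
    obtain ⟨p, hp, hpx⟩ := hx
    obtain ⟨p', hp', hpE⟩ := mem_closure_iff.1 hpx _ (hC.prod hI) hp
    exact ⟨p'.1, hp'.1, p', ⟨hp', hpE⟩, rfl⟩
  have hIne : I.Nonempty := hu.elim fun p hp => ⟨p.2, hp.1.2⟩
  have hcov : C ⊆ Prod.fst '' E u ∪ Prod.fst '' E v := by
    intro q hq
    obtain ⟨z, hz, k, hzk, hk⟩ := exists_mem_fiber_cell (q := q) hI hIne
      fun z hz => hsub ⟨hq, hz⟩
    rcases hk with rfl | rfl
    · exact Or.inl ⟨(q, z), ⟨⟨hq, hz⟩, layer_subset_biUnion k hzk⟩, rfl⟩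
    · exact Or.inr ⟨(q, z), ⟨⟨hq, hz⟩, layer_subset_biUnion k hzk⟩, rfl⟩
  obtain ⟨q, hq, ⟨⟨_, z₁⟩, ⟨hz₁, hu'⟩, rfl⟩, ⟨⟨q, z₂⟩, ⟨hz₂, hv'⟩, rfl⟩⟩ := hCc _ _
    (isOpenMap_fst _ (hE u)) (isOpenMap_fst _ (hE v)) hcov (hne u hu) (hne v hv)
  obtain ⟨k, hk, hku⟩ := mem_iUnion₂.1 hu'
  obtain ⟨l, hl, hlv⟩ := mem_iUnion₂.1 hv'
  exact ⟨q, hq, z₁, hz₁.2, z₂, hz₂.2, k, l, hku, hk, hlv, hl⟩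

lemma exists_consecutive_of_contact_cell [LocallyConnectedSpace B] {u v : V} (huv : u ≠ v)
    (h : Contact (S.cell w u) (S.cell w v)) :
    ∃ q i j, S.Consecutive q i j ∧ s(w i, w j) = s(u, v) := by
  obtain ⟨⟨q₀, z₀⟩, ⟨hu, hv⟩, hint⟩ := h
  obtain ⟨⟨C, ε⟩, ⟨⟨hC, hq₀, hCc⟩, hε⟩, hbox⟩ :=
    ((LocallyConnectedSpace.open_connected_basis q₀).prod_nhds Metric.nhds_basis_ball).mem_iff.1
      (mem_interior_iff_mem_nhds.1 hint)
  have hsub : C ×ˢ Metric.ball z₀ ε ⊆ S.cell w u ∪ S.cell w v := hbox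
  have hmem : (q₀, z₀) ∈ C ×ˢ Metric.ball z₀ ε := ⟨hq₀, Metric.mem_ball_self hε⟩
  obtain ⟨q, hq, z₁, hz₁, z₂, hz₂, k, l, hk, hku, hl, hlv⟩ := exists_fiber_meeting_layers hC
    hCc.isPreconnected Metric.isOpen_ball hsub ⟨_, hmem, hu⟩ ⟨_, hmem, hv⟩
  have hball : OrdConnected (Metric.ball z₀ ε) := (convex_ball z₀ ε).ordConnected
  rcases lt_trichotomy k l with hkl | rfl | hlk
  · obtain ⟨i, j, hij, rfl, rfl⟩ := exists_consecutive_of_segment_subset huv hkl hk hl hku hlv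
      fun z hz => hsub ⟨hq, hball.out hz₁ hz₂ hz⟩
    exact ⟨q, i, j, hij, rfl⟩
  · exact absurd (hku.symm.trans hlv) huv
  · obtain ⟨i, j, hij, rfl, rfl⟩ := exists_consecutive_of_segment_subset huv.symm hlk hl hk hlv hku
      fun z hz => (hsub ⟨hq, hball.out hz₂ hz₁ hz⟩).symm
    exact ⟨q, i, j, hij, Sym2.eq_swap⟩

lemma isConnected_interior_cell {v : V} {r : ℕ} (hr : w r = v) (hne : (S.layer r).Nonempty)
    (hconn : ∀ k, IsPreconnected (S.layer k))
    (hcontact : ∀ k ≠ r, w k = v → (S.layer k).Nonempty →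
      Contact (closure (S.layer r)) (closure (S.layer k))) :
    IsConnected (interior (S.cell w v)) := by
  have hpre (k : ℕ) : IsPreconnected (interior (closure (S.layer k))) :=
    isPreconnected_interior_closure (isOpen_layer k) (hconn k)
  have hreg (k : ℕ) : closure (S.layer k) = closure (interior (closure (S.layer k))) :=
    (closure_interior_closure_of_isOpen (isOpen_layer k)).symm
  refine isConnected_interior_closure_biUnion (fun k _ => isOpen_layer k) hr hne fun k hk => ?_
  rcases eq_or_ne k r with rfl | hkr
  · simpa only [union_self] using hpre k
  rcases (S.layer k).eq_empty_or_nonempty with hempty | hk_ne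
  · simpa only [hempty, closure_empty, union_empty] using hpre r
  · exact isPreconnected_interior_union_of_contact (hreg r) (hreg k) (hpre r) (hpre k)
      (hcontact k hkr hk hk_ne)

end Cell

/-- The stack with the `m + 1` layers cut out by the real-valued graphs `F 1, …, F m`. -/
noncomputable def ofLevels (m : ℕ) (F : ℕ → B → ℝ) (hF : ∀ k, Continuous (F k))
    (hmono : ∀ q, Monotone (F · q)) : Stack B where
  height k q := if k = 0 then ⊥ else if k ≤ m then (F k q : EReal) else ⊤
  continuous_height k := by
    split_ifs
    exacts [continuous_const, continuous_coe_real_ereal.comp (hF k), continuous_const]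
  monotone_height q k l hkl := by
    have hle := EReal.coe_le_coe (hmono q hkl)
    grind [bot_le, le_top]
  height_zero q := if_pos rfl
  exists_lt_height q z := ⟨m + 1, by simp⟩

section OfLevels

variable {m k : ℕ} {F : ℕ → B → ℝ} {hF : ∀ k, Continuous (F k)} {hmono : ∀ q, Monotone (F · q)}
  {q : B}

lemma ofLevels_height (hk : k ≠ 0) (hkm : k ≤ m) :
    (ofLevels m F hF hmono).height k q = F k q := by
  simp [ofLevels, hk, hkm]

lemma ofLevels_height_of_lt (hk : m < k) : (ofLevels m F hF hmono).height k q = ⊤ := by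
  simp [ofLevels, hk.not_ge, Nat.ne_zero_of_lt hk]

lemma ofLevels_layer_of_lt (hk : m < k) : (ofLevels m F hF hmono).layer k = ∅ :=
  eq_empty_of_forall_notMem fun p hp => by
    simpa [ofLevels_height_of_lt hk] using hp.1

lemma ofLevels_height_lt_succ_iff (hkm : k ≤ m) :
    (ofLevels m F hF hmono).height k q < (ofLevels m F hF hmono).height (k + 1) q ↔
      k = 0 ∨ k = m ∨ F k q < F (k + 1) q := by
  rcases eq_or_ne k 0 with rfl | hk
  · rcases eq_or_ne m 0 with rfl | hm
    · simp [height_zero, ofLevels_height_of_lt]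
    · simp [height_zero, ofLevels_height one_ne_zero (Nat.one_le_iff_ne_zero.2 hm)]
  rcases hkm.eq_or_lt with rfl | hkm'
  · simp [ofLevels_height hk hkm, ofLevels_height_of_lt]
  · simp [ofLevels_height hk hkm, ofLevels_height k.succ_ne_zero hkm', hk, hkm'.ne]

end OfLevels

end Stack

section Polyhedral

/-- The identification of `ℝ³` with the product of the plane and the vertical line. -/
def coords : (Fin 3 → ℝ) ≃ₜ (ℝ × ℝ) × ℝ where
  toFun x := ((x 0, x 1), x 2)
  invFun p := ![p.1.1, p.1.2, p.2]
  left_inv x := by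
    ext i
    fin_cases i <;> rfl
  right_inv _ := rfl
  continuous_toFun := by fun_prop
  continuous_invFun := by fun_prop

lemma coords_apply (x : Fin 3 → ℝ) : coords x = ((x 0, x 1), x 2) := rfl

/-- Regular closed polyhedra of `ℝ³`, viewed as subsets of `(ℝ × ℝ) × ℝ`. -/
def IsPolyhedral (A : Set ((ℝ × ℝ) × ℝ)) : Prop := IsPolyhedron3 (coords ⁻¹' A)

namespace IsPolyhedral

variable {A A' : Set ((ℝ × ℝ) × ℝ)}

lemma union (h : IsPolyhedral A) (h' : IsPolyhedral A') : IsPolyhedral (A ∪ A') := .sup _ _ h h'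

lemma closure_interior_inter (h : IsPolyhedral A) (h' : IsPolyhedral A') :
    IsPolyhedral (closure (interior (A ∩ A'))) := by
  rw [IsPolyhedral, coords.preimage_closure, coords.preimage_interior]
  exact .inf _ _ h h'

lemma closure_compl (h : IsPolyhedral A) : IsPolyhedral (closure Aᶜ) := by
  rw [IsPolyhedral, coords.preimage_closure]
  exact .compl _ h

lemma affine_le (α β γ : ℝ) :
    IsPolyhedral {p | α * p.1.1 + β * p.1.2 + γ ≤ p.2} := by
  have hhalf := IsPolyhedron3.halfspace ![α, β, -1] (-γ) fun h => by simpa using congrFun h 2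
  rw [IsPolyhedral]
  convert hhalf using 1
  ext x
  simp only [Fin.sum_univ_three, mem_preimage, mem_ofPred_eq, Matrix.cons_val, coords_apply]
  constructor <;> intro h <;> linarith

protected lemma univ : IsPolyhedral univ := by
  have h := affine_le 0 0 0
  rw [← eq_univ_of_univ_subset ((union_compl_self _).symm.subset.trans
    (union_subset_union_right _ subset_closure))]
  exact h.union h.closure_compl

protected lemma empty : IsPolyhedral ∅ := by
  simpa using IsPolyhedral.univ.closure_compl

lemma biUnion {ι : Type*} {s : Set ι} (hs : s.Finite) {A : ι → Set ((ℝ × ℝ) × ℝ)}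
    (h : ∀ i ∈ s, IsPolyhedral (A i)) : IsPolyhedral (⋃ i ∈ s, A i) := by
  induction s, hs using Set.Finite.induction_on with
  | empty => simpa using IsPolyhedral.empty
  | insert _ _ ih =>
    rw [biUnion_insert]
    exact (h _ (mem_insert _ _)).union (ih fun i hi => h i (mem_insert_of_mem _ hi))

end IsPolyhedral

/-- The functions on the plane obtained from affine ones by taking finitely many maxima
and minima. -/
inductive IsPiecewiseAffine : (ℝ × ℝ → ℝ) → Prop
  | affine (α β γ : ℝ) : IsPiecewiseAffine fun q => α * q.1 + β * q.2 + γ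
  | sup {F G : ℝ × ℝ → ℝ} : IsPiecewiseAffine F → IsPiecewiseAffine G → IsPiecewiseAffine (F ⊔ G)
  | inf {F G : ℝ × ℝ → ℝ} : IsPiecewiseAffine F → IsPiecewiseAffine G → IsPiecewiseAffine (F ⊓ G)

namespace IsPiecewiseAffine

variable {F G : ℝ × ℝ → ℝ}

protected lemma const (c : ℝ) : IsPiecewiseAffine fun _ => c := by
  simpa using affine 0 0 c

protected lemma neg (hF : IsPiecewiseAffine F) : IsPiecewiseAffine (-F) := by
  induction hF with
  | affine α β γ =>
    convert affine (-α) (-β) (-γ) using 1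
    ext q
    simp only [Pi.neg_apply]
    ring
  | sup _ _ ihF ihG =>
    rw [neg_sup]
    exact ihF.inf ihG
  | inf _ _ ihF ihG =>
    rw [neg_inf]
    exact ihF.sup ihG

protected lemma add (hF : IsPiecewiseAffine F) (hG : IsPiecewiseAffine G) :
    IsPiecewiseAffine (F + G) := by
  induction hF with
  | affine α β γ =>
    induction hG with
    | affine α' β' γ' =>
      convert affine (α + α') (β + β') (γ + γ') using 1
      ext q
      simp only [Pi.add_apply]
      ring
    | sup _ _ ihF ihG =>
      rw [add_sup]
      exact ihF.sup ihG
    | inf _ _ ihF ihG =>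
      rw [add_inf]
      exact ihF.inf ihG
  | sup _ _ ihF ihG =>
    rw [sup_add]
    exact ihF.sup ihG
  | inf _ _ ihF ihG =>
    rw [inf_add]
    exact ihF.inf ihG

protected lemma nsmul (hF : IsPiecewiseAffine F) (n : ℕ) : IsPiecewiseAffine (n • F) := by
  induction n with
  | zero => exact zero_nsmul F ▸ .const 0
  | succ n ih => exact succ_nsmul F n ▸ ih.add hF

protected lemma sum {ι : Type*} {s : Finset ι} {F : ι → ℝ × ℝ → ℝ}
    (h : ∀ i ∈ s, IsPiecewiseAffine (F i)) : IsPiecewiseAffine (∑ i ∈ s, F i) :=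
  Finset.sum_induction _ _ (fun _ _ => .add) (.const 0) h

protected lemma continuous (hF : IsPiecewiseAffine F) : Continuous F := by
  induction hF with
  | affine α β γ => fun_prop
  | sup _ _ ihF ihG => exact Continuous.sup ihF ihG
  | inf _ _ ihF ihG => exact Continuous.inf ihF ihG

lemma isPolyhedral_epigraph (hF : IsPiecewiseAffine F) : IsPolyhedral {p | F p.1 ≤ p.2} := by
  induction hF with
  | affine α β γ => exact .affine_le α β γ
  | @sup F G hF hG ihF ihG =>
    have ht : Continuous fun q => ((F ⊔ G) q : EReal) :=
      continuous_coe_real_ereal.comp (hF.sup hG).continuous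
    have hreg := (congrArg closure (interior_le_snd ht)).trans (closure_lt_snd ht)
    simp only [EReal.coe_le_coe_iff] at hreg
    rw [← hreg]
    simpa only [Pi.sup_apply, sup_le_iff, ofPred_and] using ihF.closure_interior_inter ihG
  | inf _ _ ihF ihG => simpa only [Pi.inf_apply, inf_le_iff, ofPred_or] using ihF.union ihG

end IsPiecewiseAffine

section OfLevels

variable {m : ℕ} {F : ℕ → ℝ × ℝ → ℝ} {hF : ∀ k, Continuous (F k)} {hmono : ∀ q, Monotone (F · q)}

lemma isPolyhedral_height_le_snd (hPA : ∀ k, IsPiecewiseAffine (F k)) (k : ℕ) :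
    IsPolyhedral {p | (Stack.ofLevels m F hF hmono).height k p.1 ≤ p.2} := by
  rcases eq_or_ne k 0 with rfl | hk
  · simpa [Stack.height_zero] using IsPolyhedral.univ
  rcases le_or_gt k m with hkm | hkm
  · simpa [Stack.ofLevels_height hk hkm] using (hPA k).isPolyhedral_epigraph
  · simpa [Stack.ofLevels_height_of_lt hkm] using IsPolyhedral.empty

lemma isPolyhedral_closure_layer_ofLevels (hPA : ∀ k, IsPiecewiseAffine (F k)) (k : ℕ) :
    IsPolyhedral (closure ((Stack.ofLevels m F hF hmono).layer k)) := by
  set S := Stack.ofLevels m F hF hmono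
  have habove : IsPolyhedral {p | p.2 ≤ S.height (k + 1) p.1} := by
    rw [← closure_snd_lt (S.continuous_height (k + 1))]
    simpa only [compl_ofPred, not_le] using (isPolyhedral_height_le_snd hPA (k + 1)).closure_compl
  convert (isPolyhedral_height_le_snd hPA k).closure_interior_inter habove using 2
  rw [interior_inter, interior_le_snd (S.continuous_height k),
    interior_snd_le (S.continuous_height (k + 1))]
  rfl

lemma isPolyhedral_cell_ofLevels {V : Type*} (hPA : ∀ k, IsPiecewiseAffine (F k)) (w : ℕ → V)
    (v : V) : IsPolyhedral ((Stack.ofLevels m F hF hmono).cell w v) := by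
  set S := Stack.ofLevels m F hF hmono
  have hcell : S.cell w v = closure (⋃ k ∈ {k ∈ Iic m | w k = v}, S.layer k) := by
    refine congrArg closure (subset_antisymm (iUnion₂_subset fun k hk => ?_)
      (biUnion_mono (fun k hk => hk.2) fun _ _ => subset_rfl))
    rcases le_or_gt k m with hkm | hkm
    · exact subset_biUnion_of_mem (u := S.layer) ⟨hkm, hk⟩
    · exact (Stack.ofLevels_layer_of_lt hkm).trans_subset (empty_subset _)
  have hfin : {k ∈ Iic m | w k = v}.Finite := (finite_Iic m).sep _
  rw [hcell, hfin.closure_biUnion]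
  exact .biUnion hfin fun k _ => isPolyhedral_closure_layer_ofLevels hPA k

end OfLevels

end Polyhedral

section Tour

variable {V : Type*} {G : SimpleGraph V}

lemma exists_walk_subset_darts (hG : G.Preconnected) (x : V) (l : List G.Dart) :
    ∃ (y : V) (p : G.Walk x y), l ⊆ p.darts := by
  induction l with
  | nil => exact ⟨x, .nil, List.nil_subset _⟩
  | cons d l ih =>
    obtain ⟨y, p, hp⟩ := ih
    obtain ⟨r⟩ := hG y d.fst
    refine ⟨d.snd, p.append (r.concat d.adj), List.cons_subset.2 ⟨?_, fun e he => ?_⟩⟩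
    · simp [SimpleGraph.Walk.darts_append, SimpleGraph.Walk.darts_concat]
    · simp [SimpleGraph.Walk.darts_append, hp he]

lemma exists_tour [Finite V] (hG : G.Connected) :
    ∃ (m : ℕ) (w : ℕ → V), (∀ k < m, G.Adj (w k) (w (k + 1))) ∧ (∀ v, ∃ k ≤ m, w k = v) ∧
      ∀ u v, G.Adj u v → ∃ k < m, w k = u ∧ w (k + 1) = v := by
  classical
  have := Fintype.ofFinite V
  obtain ⟨x⟩ := hG.nonempty
  obtain ⟨y, p, hp⟩ := exists_walk_subset_darts hG.preconnected x Finset.univ.toList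
  have hedge (u v : V) (huv : G.Adj u v) :
      ∃ k < p.length, p.getVert k = u ∧ p.getVert (k + 1) = v := by
    obtain ⟨k, hk, hkd⟩ := List.mem_iff_getElem.1
      (hp (Finset.mem_toList.2 (Finset.mem_univ ⟨(u, v), huv⟩)))
    rw [SimpleGraph.Walk.darts_getElem_eq_getVert] at hkd
    exact ⟨k, by simpa using hk, congrArg (·.fst) hkd, congrArg (·.snd) hkd⟩
  refine ⟨p.length, p.getVert, fun k hk => p.adj_getVert_succ hk, fun v => ?_, hedge⟩
  rcases eq_or_ne v x with rfl | hvx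
  · exact ⟨0, Nat.zero_le _, p.getVert_zero⟩
  · have := nontrivial_of_ne v x hvx
    obtain ⟨u, hu⟩ := hG.preconnected.exists_adj_of_nontrivial v
    obtain ⟨k, hk, hkv, -⟩ := hedge v u hu
    exact ⟨k, hk.le, hkv⟩

end Tour

section Pinching

/-- A plateau function on the plane: it vanishes unless `|x - d| < 1 / 2` and `0 < y`, so that
distinct bumps have disjoint supports, and equals `1` near the point `(d, 2)`. -/
noncomputable def bump (d : ℕ) (q : ℝ × ℝ) : ℝ := max 0 (min 1 (min (2 - 4 * |q.1 - d|) q.2))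

lemma bump_nonneg (d : ℕ) (q : ℝ × ℝ) : 0 ≤ bump d q := le_max_left _ _

lemma bump_le_one (d : ℕ) (q : ℝ × ℝ) : bump d q ≤ 1 := max_le zero_le_one (min_le_left _ _)

lemma bump_mono (d : ℕ) (x : ℝ) : Monotone fun y => bump d (x, y) := fun _ _ h =>
  max_le_max_left _ (min_le_min_left _ (min_le_min_left _ h))

lemma bump_of_nonpos (d : ℕ) {q : ℝ × ℝ} (hq : q.2 ≤ 0) : bump d q = 0 :=
  max_eq_left (((min_le_right _ _).trans (min_le_right _ _)).trans hq)

lemma abs_sub_lt_of_bump_ne_zero {d : ℕ} {q : ℝ × ℝ} (h : bump d q ≠ 0) : |q.1 - d| < 1 / 2 := by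
  by_contra! hq
  refine h (max_eq_left (((min_le_right _ _).trans (min_le_left _ _)).trans ?_))
  linarith

lemma bump_eq_zero_of_ne {d e : ℕ} {q : ℝ × ℝ} (hd : bump d q ≠ 0) (hed : e ≠ d) :
    bump e q = 0 := by
  by_contra he
  have hlt : |((e : ℤ) - d : ℤ)| < (1 : ℤ) := by
    have := abs_sub_lt_of_bump_ne_zero hd
    have := abs_sub_lt_of_bump_ne_zero he
    have := abs_sub_le (e : ℝ) q.1 d
    rw [abs_sub_comm (e : ℝ) q.1] at this
    rw [← Int.cast_lt (R := ℝ)]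
    push_cast
    linarith
  exact hed (by simpa [sub_eq_zero] using Int.abs_lt_one_iff.1 hlt)

lemma eventually_bump_eq_one (d : ℕ) : ∀ᶠ q in 𝓝 ((d, 2) : ℝ × ℝ), bump d q = 1 := by
  have hcont : Continuous fun q : ℝ × ℝ => min (2 - 4 * |q.1 - d|) q.2 := by fun_prop
  filter_upwards [hcont.continuousAt.eventually_const_lt (by norm_num : (1 : ℝ) < _)] with q hq
  rw [bump, min_eq_left hq.le, max_eq_right zero_le_one]

lemma isPiecewiseAffine_bump (d : ℕ) : IsPiecewiseAffine (bump d) := by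
  convert (IsPiecewiseAffine.const 0).sup ((IsPiecewiseAffine.const 1).inf
    (((IsPiecewiseAffine.affine (-4) 0 (2 + 4 * d)).inf (.affine 4 0 (2 - 4 * d))).inf
      (.affine 0 1 0))) using 1
  ext q
  have htent : 2 - 4 * |q.1 - d| =
      min (-4 * q.1 + 0 * q.2 + (2 + 4 * d)) (4 * q.1 + 0 * q.2 + (2 - 4 * d)) := by
    grind
  simp [bump, htent]

/-- The number of unit steps by which the `k`-th level has to be lowered in order to bring the
levels `i + 1, …, d` together at height `i + 1`. -/
def pinch (i d k : ℕ) : ℕ := if k ≤ d then k - (i + 1) else 0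

lemma pinch_succ_of_lt_of_lt {i d k : ℕ} (hi : i < k) (hd : k < d) :
    pinch i d (k + 1) = pinch i d k + 1 := by
  grind [pinch]

lemma pinch_succ_le_of_not_lt_of_lt {i d k : ℕ} (h : ¬(i < k ∧ k < d)) :
    pinch i d (k + 1) ≤ pinch i d k := by
  grind [pinch]

/-- The `k`-th of the horizontal planes `z = 1, …, z = m`, deformed near each `(d, 2)` so that
there the levels `a d + 1, …, d` coincide. -/
noncomputable def level (a : ℕ → ℕ) (m k : ℕ) (q : ℝ × ℝ) : ℝ :=
  k - ∑ d ∈ Finset.range (m + 1), pinch (a d) d k * bump d q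

variable {a : ℕ → ℕ} {m k d : ℕ} {q : ℝ × ℝ}

lemma isPiecewiseAffine_level (a : ℕ → ℕ) (m k : ℕ) : IsPiecewiseAffine (level a m k) := by
  convert (IsPiecewiseAffine.const k).add (IsPiecewiseAffine.sum (s := Finset.range (m + 1))
    fun d _ => (isPiecewiseAffine_bump d).nsmul (pinch (a d) d k)).neg using 1
  ext q
  simp [level, sub_eq_add_neg]

lemma level_eq_of_forall_ne (hd : d ≤ m) (h : ∀ e ≠ d, e ≤ m → bump e q = 0) (k : ℕ) :
    level a m k q = k - pinch (a d) d k * bump d q := by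
  rw [level, Finset.sum_eq_single_of_mem d (Finset.mem_range_succ_iff.2 hd) fun e he hed => by
    rw [h e hed (Finset.mem_range_succ_iff.1 he), mul_zero]]

lemma exists_level_eq (a : ℕ → ℕ) (m : ℕ) (q : ℝ × ℝ) :
    ∃ d ≤ m, ∀ k, level a m k q = k - pinch (a d) d k * bump d q := by
  by_cases h : ∃ d ≤ m, bump d q ≠ 0
  · obtain ⟨d, hd, hne⟩ := h
    exact ⟨d, hd, level_eq_of_forall_ne hd fun e he _ => bump_eq_zero_of_ne hne he⟩
  · push Not at h
    exact ⟨0, m.zero_le, level_eq_of_forall_ne m.zero_le fun e _ => h e⟩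

lemma level_of_bump_eq_one (hd : d ≤ m) (h : bump d q = 1) (k : ℕ) :
    level a m k q = k - pinch (a d) d k := by
  rw [level_eq_of_forall_ne hd (fun e he _ => bump_eq_zero_of_ne (by simp [h]) he), h, mul_one]

lemma level_lt_level_succ_iff :
    level a m k q < level a m (k + 1) q ↔ ∀ d ≤ m, a d < k → k < d → bump d q < 1 := by
  constructor
  · intro h d hdm had hkd
    refine (bump_le_one d q).lt_of_ne fun hone => h.ne ?_
    rw [level_of_bump_eq_one hdm hone, level_of_bump_eq_one hdm hone,
      pinch_succ_of_lt_of_lt had hkd]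
    push_cast
    ring
  · intro h
    obtain ⟨d, hdm, hlevel⟩ := exists_level_eq a m q
    rw [hlevel, hlevel]
    push_cast
    by_cases hkd : a d < k ∧ k < d
    · have := h d hdm hkd.1 hkd.2
      rw [pinch_succ_of_lt_of_lt hkd.1 hkd.2]
      push_cast
      linarith
    · have : (pinch (a d) d (k + 1) : ℝ) * bump d q ≤ pinch (a d) d k * bump d q :=
        mul_le_mul_of_nonneg_right (mod_cast pinch_succ_le_of_not_lt_of_lt hkd) (bump_nonneg d q)
      linarith

lemma monotone_level (a : ℕ → ℕ) (m : ℕ) (q : ℝ × ℝ) : Monotone (level a m · q) := by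
  refine monotone_nat_of_le_succ fun k => ?_
  by_cases h : level a m k q < level a m (k + 1) q
  · exact h.le
  · obtain ⟨d, hdm, had, hkd, hone⟩ : ∃ d ≤ m, a d < k ∧ k < d ∧ 1 ≤ bump d q := by
      simpa [level_lt_level_succ_iff] using h
    have hone := (bump_le_one d q).antisymm hone
    rw [level_of_bump_eq_one hdm hone, level_of_bump_eq_one hdm hone,
      pinch_succ_of_lt_of_lt had hkd]
    push_cast
    linarith

/-- The stack of `m + 1` layers in which every layer `d` is brought into contact with the layer
`a d` by squeezing out the layers in between. -/
noncomputable def pinchedStack (a : ℕ → ℕ) (m : ℕ) : Stack (ℝ × ℝ) :=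
  .ofLevels m (level a m) (fun k => (isPiecewiseAffine_level a m k).continuous) (monotone_level a m)

lemma pinchedStack_height_of_lt (h : m < k) : (pinchedStack a m).height k q = ⊤ :=
  Stack.ofLevels_height_of_lt h

lemma pinchedStack_height_lt_succ_iff (hkm : k ≤ m) :
    (pinchedStack a m).height k q < (pinchedStack a m).height (k + 1) q ↔
      ∀ d ≤ m, a d < k → k < d → bump d q < 1 := by
  rw [pinchedStack, Stack.ofLevels_height_lt_succ_iff hkm, level_lt_level_succ_iff]
  grind

lemma layer_pinchedStack_nonempty_iff : ((pinchedStack a m).layer k).Nonempty ↔ k ≤ m := by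
  constructor
  · contrapose!
    exact Stack.ofLevels_layer_of_lt
  · intro hk
    obtain ⟨z, hz⟩ := Stack.exists_mem_layer ((pinchedStack_height_lt_succ_iff (q := 0) hk).2
      fun d _ _ _ => (bump_of_nonpos d le_rfl).trans_lt one_pos)
    exact ⟨_, hz⟩

lemma isPreconnected_layer_pinchedStack (a : ℕ → ℕ) (m k : ℕ) :
    IsPreconnected ((pinchedStack a m).layer k) := by
  rcases lt_or_ge m k with hmk | hkm
  · rw [not_nonempty_iff_eq_empty.1 (layer_pinchedStack_nonempty_iff.not.2 hmk.not_ge)]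
    exact isPreconnected_empty
  refine Stack.isPreconnected_layer (isPreconnected_of_isOpen_of_fibers (isOpen_lt
    ((pinchedStack a m).continuous_height k) ((pinchedStack a m).continuous_height (k + 1))) ?_ ?_)
  all_goals simp only [mem_ofPred_eq, pinchedStack_height_lt_succ_iff hkm]
  · have himage : Prod.fst '' {q : ℝ × ℝ | ∀ d ≤ m, a d < k → k < d → bump d q < 1} = univ :=
      eq_univ_of_forall fun x => ⟨(x, 0), fun d _ _ _ =>
        (bump_of_nonpos d le_rfl).trans_lt one_pos, rfl⟩
    exact himage ▸ isPreconnected_univ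
  · intro x
    have hlower : IsLowerSet {y | ∀ d ≤ m, a d < k → k < d → bump d (x, y) < 1} :=
      fun y y' hle hy d hdm had hkd => (bump_mono d x hle).trans_lt (hy d hdm had hkd)
    exact hlower.ordConnected.isPreconnected

lemma contact_layer_pinchedStack_succ (hk : k < m) :
    Contact (closure ((pinchedStack a m).layer k))
      (closure ((pinchedStack a m).layer (k + 1))) := by
  have hbump : ∀ d, bump d 0 < 1 := fun d => (bump_of_nonpos d le_rfl).trans_lt one_pos
  have hconsec : (pinchedStack a m).Consecutive 0 k (k + 1) :=
    ⟨k.lt_succ_self, (pinchedStack_height_lt_succ_iff hk.le).2 fun d _ _ _ => hbump d, rfl,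
      (pinchedStack_height_lt_succ_iff hk).2 fun d _ _ _ => hbump d⟩
  exact hconsec.contact_closure_layer .rfl

lemma pinchedStack_height_eq_of_bump_eq_one (had : a d < d) (hdm : d ≤ m) (h : bump d q = 1) :
    (pinchedStack a m).height (a d + 1) q = (pinchedStack a m).height d q := by
  rw [pinchedStack, Stack.ofLevels_height (Nat.succ_ne_zero _) (had.trans_le hdm),
    Stack.ofLevels_height (Nat.ne_zero_of_lt had) hdm, level_of_bump_eq_one hdm h,
    level_of_bump_eq_one hdm h, EReal.coe_eq_coe_iff]
  simp [pinch, Nat.cast_sub had, Nat.succ_le_of_lt had]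

lemma contact_layer_pinchedStack (had : a d < d) (hdm : d ≤ m) :
    Contact (closure ((pinchedStack a m).layer (a d))) (closure ((pinchedStack a m).layer d)) := by
  have hone := (eventually_bump_eq_one d).self_of_nhds
  have hlt : ∀ e ≠ d, bump e (d, 2) < 1 := fun e he =>
    (bump_eq_zero_of_ne (by simp [hone]) he).trans_lt one_pos
  have hconsec : (pinchedStack a m).Consecutive (d, 2) (a d) d := by
    refine ⟨had, (pinchedStack_height_lt_succ_iff (had.le.trans hdm)).2 fun e _ hae _ => hlt e ?_,
      pinchedStack_height_eq_of_bump_eq_one had hdm hone,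
      (pinchedStack_height_lt_succ_iff hdm).2 fun e _ _ hde => hlt e hde.ne'⟩
    rintro rfl
    exact hae.false
  exact hconsec.contact_closure_layer <| (eventually_bump_eq_one d).mono fun q hq =>
    pinchedStack_height_eq_of_bump_eq_one had hdm hq

lemma consecutive_pinchedStack {i j : ℕ} (h : (pinchedStack a m).Consecutive q i j) :
    j ≤ m ∧ (j = i + 1 ∨ i = a j) := by
  have hjm : j ≤ m := by
    by_contra! hmj
    exact not_top_lt (pinchedStack_height_of_lt hmj ▸ h.upper)
  have hlower := (pinchedStack_height_lt_succ_iff (h.lt.le.trans hjm)).1 h.lower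
  have hupper := (pinchedStack_height_lt_succ_iff hjm).1 h.upper
  have hempty (k : ℕ) (hik : i < k) (hkj : k < j) : ∃ d ≤ m, a d < k ∧ k < d ∧ 1 ≤ bump d q := by
    have hmono := (pinchedStack a m).monotone_height q
    have hle : (pinchedStack a m).height (k + 1) q ≤ (pinchedStack a m).height k q :=
      (hmono hkj).trans (h.eq.symm.le.trans (hmono hik))
    simpa using (pinchedStack_height_lt_succ_iff (hkj.le.trans hjm)).not.1 hle.not_gt
  refine ⟨hjm, or_iff_not_imp_left.2 fun hne => ?_⟩
  obtain ⟨d, hdm, had, hid, hone⟩ := hempty (i + 1) i.lt_succ_self (by have := h.lt; omega)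
  have hjd : d ≤ j := by
    by_contra! hlt
    exact (hupper d hdm (by have := h.lt; omega) hlt).not_ge hone
  have hiad : i ≤ a d := by
    by_contra! hlt
    exact (hlower d hdm hlt (by omega)).not_ge hone
  obtain rfl : d = j := by
    by_contra hdj
    obtain ⟨e, -, -, hde, hone'⟩ := hempty d (by omega) (by omega)
    have := bump_eq_zero_of_ne (q := q) (d := d) (by linarith) hde.ne'
    linarith
  omega

end Pinching

section Realization

variable {V : Type*} {w : ℕ → V} {m : ℕ}

/-- The first position at which the label of `k` occurs in the sequence `w`. -/
noncomputable def firstVisit (w : ℕ → V) (k : ℕ) : ℕ := sInf {i | w i = w k}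

lemma label_firstVisit (w : ℕ → V) (k : ℕ) : w (firstVisit w k) = w k :=
  Nat.sInf_mem (s := {i | w i = w k}) ⟨k, rfl⟩

lemma firstVisit_le (w : ℕ → V) (k : ℕ) : firstVisit w k ≤ k :=
  Nat.sInf_le (s := {i | w i = w k}) rfl

lemma firstVisit_congr {k l : ℕ} (h : w k = w l) : firstVisit w k = firstVisit w l := by
  simp only [firstVisit, h]

/-- The stack in which every layer touches the first layer with the same label. -/
noncomputable abbrev tourStack (w : ℕ → V) (m : ℕ) : Stack (ℝ × ℝ) :=
  pinchedStack (firstVisit w) m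

lemma isConnected_interior_cell_tourStack (hw : ∀ v, ∃ k ≤ m, w k = v) (v : V) :
    IsConnected (interior ((tourStack w m).cell w v)) := by
  obtain ⟨k, hkm, rfl⟩ := hw v
  refine Stack.isConnected_interior_cell (label_firstVisit w k)
    (layer_pinchedStack_nonempty_iff.2 ((firstVisit_le w k).trans hkm))
    (isPreconnected_layer_pinchedStack _ _) fun l hl hlk hne => ?_
  rw [← firstVisit_congr hlk] at hl ⊢
  exact contact_layer_pinchedStack ((firstVisit_le w l).lt_of_ne hl.symm)
    (layer_pinchedStack_nonempty_iff.1 hne)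

lemma contact_cell_tourStack_iff {G : SimpleGraph V} (hstep : ∀ k < m, G.Adj (w k) (w (k + 1)))
    (hedge : ∀ u v, G.Adj u v → ∃ k < m, w k = u ∧ w (k + 1) = v) {u v : V} (huv : u ≠ v) :
    Contact ((tourStack w m).cell w u) ((tourStack w m).cell w v) ↔ G.Adj u v := by
  constructor
  · intro h
    obtain ⟨q, i, j, hij, hs⟩ := Stack.exists_consecutive_of_contact_cell huv h
    rw [← SimpleGraph.mem_edgeSet, ← hs, SimpleGraph.mem_edgeSet]
    obtain ⟨hjm, rfl | hi⟩ := consecutive_pinchedStack hij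
    · exact hstep i hjm
    · have hlabel : w i = w j := hi ▸ label_firstVisit w j
      exact absurd (Sym2.mk_isDiag_iff.1 (hs ▸ Sym2.mk_isDiag_iff.2 hlabel)) huv
  · intro h
    obtain ⟨k, hk, rfl, rfl⟩ := hedge u v h
    exact (contact_layer_pinchedStack_succ hk).mono (Stack.closure_layer_subset_cell k)
      (Stack.closure_layer_subset_cell (k + 1))

lemma isConnected_interior_union_cell_tourStack_iff {G : SimpleGraph V}
    (hstep : ∀ k < m, G.Adj (w k) (w (k + 1))) (hw : ∀ v, ∃ k ≤ m, w k = v)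
    (hedge : ∀ u v, G.Adj u v → ∃ k < m, w k = u ∧ w (k + 1) = v) {u v : V} (huv : u ≠ v) :
    IsConnected (interior ((tourStack w m).cell w u ∪ (tourStack w m).cell w v)) ↔ G.Adj u v :=
  (isConnected_interior_union_iff_contact (Stack.closure_interior_cell u).symm
    (Stack.closure_interior_cell v).symm (isConnected_interior_cell_tourStack hw u)
    (isConnected_interior_cell_tourStack hw v)).trans (contact_cell_tourStack_iff hstep hedge huv)

end Realization

end NeighbourhoodGraph

open NeighbourhoodGraph

/-- Every finite connected simple graph is the neighbourhood graph of a connected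
partition of `ℝ³` by regular closed polyhedra. -/
theorem connected_graph_is_neighbourhood_graph
    (V : Type) [Fintype V] (G : SimpleGraph V) (hG : G.Connected) :
    ∃ X : V → Set (Fin 3 → ℝ),
      (∀ v, IsPolyhedron3 (X v)) ∧
      (∀ v, X v = closure (interior (X v))) ∧
      (∀ v, (X v).Nonempty) ∧
      (∀ v, IsConnected (interior (X v))) ∧
      (∀ u v, u ≠ v → interior (X u) ∩ interior (X v) = ∅) ∧
      (⋃ v, X v) = Set.univ ∧
      (∀ u v, u ≠ v → (IsConnected (interior (X u ∪ X v)) ↔ G.Adj u v)) := by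
  obtain ⟨m, w, hstep, hw, hedge⟩ := exists_tour hG
  have hconn (v : V) : IsConnected (interior (coords ⁻¹' (tourStack w m).cell w v)) := by
    rw [← coords.preimage_interior, coords.isConnected_preimage]
    exact isConnected_interior_cell_tourStack hw v
  refine ⟨fun v => coords ⁻¹' (tourStack w m).cell w v, fun v => ?polyhedral, fun v => ?regular,
    fun v => (hconn v).nonempty.mono interior_subset, hconn, fun u v huv => ?disjoint, ?cover,
    fun u v huv => ?adj⟩
  case polyhedral => exact isPolyhedral_cell_ofLevels (isPiecewiseAffine_level _ m) w v
  case regular => rw [← coords.preimage_interior, ← coords.preimage_closure,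
    Stack.closure_interior_cell]
  case disjoint => rw [← coords.preimage_interior, ← coords.preimage_interior, ← preimage_inter,
    (Stack.disjoint_interior_cell huv).inter_eq, preimage_empty]
  case cover => rw [← preimage_iUnion, Stack.iUnion_cell, preimage_univ]
  case adj => rw [← preimage_union, ← coords.preimage_interior, coords.isConnected_preimage,
    isConnected_interior_union_cell_tourStack_iff hstep hw hedge huv]
end

section
/- Let Γ be a Jordan curve in ℝ² and let χ be a Jordan arc whose endpoints lie on Γ and whose interior points avoid Γ (a chord of Γ). Then χ divides one of the two residual domains of Γ into exactly two subdomains. -/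
/-!
The idea is Eilenberg's: separation properties of a plane set are read off from continuous
logarithms. Let `p ≠ q` be the endpoints of `χ` and `U` the residual domain of `Γ` containing the
rest of `χ`.

*At least two pieces.* Since `Γ` joins `p` and `q` outside `U`, and `χ` joins them outside `χᶜ`, the
function `(z - p) / (z - q)` has a continuous logarithm on `U` and one on `χᶜ`. Were `U \ χ`
connected, these could be glued to a logarithm on `U ∪ χᶜ = ℂ \ {p, q}`, hence on a small circle
around `p`, where the function winds once.

*At most two pieces.* For `a, b, c ∈ U \ χ` the functions `(z - a) / (z - c)` and
`(z - b) / (z - c)` have logarithms on `Γ` and on the arc `χ`. Since `Γ ∩ χ` has two points, the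
obstruction to gluing such a pair of logarithms is a single integer, so some nontrivial product
`((z - a) / (z - c)) ^ n * ((z - b) / (z - c)) ^ m` has a logarithm on `Γ ∪ χ`. If `a`, `b`, `c` lay
in three different components of the complement of `Γ ∪ χ`, two of these would be bounded; but the
point of a bounded component enters the product with exponent `0`, because the logarithm on the
boundary lets the power of `z - a` outside that component be extended to a nonvanishing function on
the whole plane, which does not wind around a large circle.
-/

open Set Topology unitInterval

section ConnectedComponents

variable {X : Type*} [TopologicalSpace X]

lemma closure_connectedComponentIn_inter_subset (F : Set X) (x : X) :
    closure (connectedComponentIn F x) ∩ F ⊆ connectedComponentIn F x := by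
  by_cases hx : x ∈ F
  · have hsub : connectedComponentIn F x ⊆ closure (connectedComponentIn F x) ∩ F :=
      subset_inter subset_closure (connectedComponentIn_subset F x)
    have hpre : IsPreconnected (closure (connectedComponentIn F x) ∩ F) :=
      isPreconnected_connectedComponentIn.subset_closure hsub inter_subset_left
    exact hpre.subset_connectedComponentIn (hsub (mem_connectedComponentIn hx)) inter_subset_right
  · simp [connectedComponentIn_eq_empty hx]

lemma notMem_closure_connectedComponentIn {F : Set X} {x y : X} (hy : y ∈ F)
    (hne : connectedComponentIn F x ≠ connectedComponentIn F y) :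
    y ∉ closure (connectedComponentIn F x) := fun h =>
  hne (connectedComponentIn_eq (closure_connectedComponentIn_inter_subset F x ⟨h, hy⟩))

lemma frontier_connectedComponentIn_subset_compl [LocallyConnectedSpace X] {F : Set X}
    (hF : IsOpen F) (x : X) : frontier (connectedComponentIn F x) ⊆ Fᶜ := by
  rw [hF.connectedComponentIn.frontier_eq]
  exact fun z hz hzF => hz.2 (closure_connectedComponentIn_inter_subset F x ⟨hz.1, hzF⟩)

lemma connectedComponentIn_connectedComponentIn_diff {F T : Set X} {x y : X}
    (hy : y ∈ connectedComponentIn F x \ T) :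
    connectedComponentIn (connectedComponentIn F x \ T) y = connectedComponentIn (F \ T) y := by
  have hyF : y ∈ F \ T := ⟨connectedComponentIn_subset F x hy.1, hy.2⟩
  refine (connectedComponentIn_mono y
    (sdiff_subset_sdiff_left (connectedComponentIn_subset F x))).antisymm ?_
  refine isPreconnected_connectedComponentIn.subset_connectedComponentIn
    (mem_connectedComponentIn hyF) (subset_sdiff.2 ⟨?_, ?_⟩)
  · rw [connectedComponentIn_eq hy.1]
    exact connectedComponentIn_mono y sdiff_subset
  · exact disjoint_sdiff_left.mono_left (connectedComponentIn_subset _ _)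

lemma joinedIn_of_isPreconnected_subset [LocallyPathConnectedSpace X] {C O : Set X}
    (hC : IsPreconnected C) (hO : IsOpen O) (hCO : C ⊆ O) {x y : X} (hx : x ∈ C) (hy : y ∈ C) :
    JoinedIn O x y := by
  have hconn : IsConnected (connectedComponentIn O x) :=
    isConnected_connectedComponentIn_iff.2 (hCO hx)
  have hpath := hO.connectedComponentIn.isConnected_iff_isPathConnected.1 hconn
  exact (hpath.joinedIn x (mem_connectedComponentIn (hCO hx)) y
    (hC.subset_connectedComponentIn hx hCO hy)).mono (connectedComponentIn_subset O x)

/-- The set `S` has exactly two connected components `V₁` and `V₂`; components of a set are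
given as `connectedComponentIn S y` for `y ∈ S`. -/
def HasExactlyTwoComponents (S : Set X) : Prop :=
  ∃ V₁ V₂ : Set X, V₁ ≠ V₂ ∧
    (∃ y₁ ∈ S, V₁ = connectedComponentIn S y₁) ∧
    (∃ y₂ ∈ S, V₂ = connectedComponentIn S y₂) ∧
    ∀ y ∈ S, connectedComponentIn S y = V₁ ∨ connectedComponentIn S y = V₂

lemma hasExactlyTwoComponents_of_not_isPreconnected {S : Set X} (hS : ¬ IsPreconnected S)
    (htwo : ∀ a ∈ S, ∀ b ∈ S, ∀ c ∈ S,
      connectedComponentIn S a = connectedComponentIn S b ∨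
      connectedComponentIn S c = connectedComponentIn S a ∨
      connectedComponentIn S c = connectedComponentIn S b) :
    HasExactlyTwoComponents S := by
  obtain ⟨a, ha, b, hb, hab⟩ : ∃ a ∈ S, ∃ b ∈ S,
      connectedComponentIn S a ≠ connectedComponentIn S b := by
    by_contra! hall
    refine hS (isPreconnected_of_forall_pair fun a ha b hb => ?_)
    exact ⟨_, connectedComponentIn_subset S a, mem_connectedComponentIn ha,
      hall a ha b hb ▸ mem_connectedComponentIn hb, isPreconnected_connectedComponentIn⟩
  exact ⟨_, _, hab, ⟨a, ha, rfl⟩, ⟨b, hb, rfl⟩,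
    fun c hc => (htwo a ha b hb c hc).resolve_left hab⟩

lemma HasExactlyTwoComponents.of_image {Y : Type*} [TopologicalSpace Y] (e : X ≃ₜ Y) {S : Set X}
    (h : HasExactlyTwoComponents (e '' S)) : HasExactlyTwoComponents S := by
  have himage : ∀ y ∈ S, connectedComponentIn (e '' S) (e y) = e '' connectedComponentIn S y :=
    fun y hy => (e.image_connectedComponentIn hy).symm
  obtain ⟨_, _, hne, ⟨_, ⟨y₁, hy₁, rfl⟩, rfl⟩, ⟨_, ⟨y₂, hy₂, rfl⟩, rfl⟩, hall⟩ := h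
  rw [himage y₁ hy₁, himage y₂ hy₂] at hne hall
  refine ⟨_, _, fun heq => hne (by rw [heq]), ⟨y₁, hy₁, rfl⟩, ⟨y₂, hy₂, rfl⟩, fun y hy => ?_⟩
  have hy' := hall (e y) (mem_image_of_mem e hy)
  rwa [himage y hy, e.injective.image_injective.eq_iff, e.injective.image_injective.eq_iff] at hy'

end ConnectedComponents

section BoundedComponents

variable {E : Type*} [NormedAddCommGroup E] [NormedSpace ℝ E]

lemma isPreconnected_compl_closedBall_zero (hE : 1 < Module.rank ℝ E) {R : ℝ} (hR : 0 ≤ R) :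
    IsPreconnected (Metric.closedBall (0 : E) R)ᶜ := by
  have hpolar : (Metric.closedBall (0 : E) R)ᶜ =
      (fun v : ℝ × E => v.1 • v.2) '' (Ioi R ×ˢ Metric.sphere 0 1) := by
    ext x
    simp only [mem_compl_iff, mem_closedBall_zero_iff, not_le, mem_image, mem_prod, mem_Ioi,
      mem_sphere_zero_iff_norm, Prod.exists]
    constructor
    · intro hx
      have hx0 : ‖x‖ ≠ 0 := (hR.trans_lt hx).ne'
      exact ⟨‖x‖, ‖x‖⁻¹ • x, ⟨hx, by simp [norm_smul, hx0]⟩, smul_inv_smul₀ hx0 x⟩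
    · rintro ⟨r, v, ⟨hr, hv⟩, rfl⟩
      rwa [norm_smul, hv, mul_one, Real.norm_of_nonneg (hR.trans hr.le)]
  rw [hpolar]
  exact (isPreconnected_Ioi.prod (isPreconnected_sphere hE 0 1)).image _ (by fun_prop)

lemma isBounded_connectedComponentIn_compl_or (hE : 1 < Module.rank ℝ E) {K : Set E}
    (hK : Bornology.IsBounded K) {a b : E}
    (hab : connectedComponentIn Kᶜ a ≠ connectedComponentIn Kᶜ b) :
    Bornology.IsBounded (connectedComponentIn Kᶜ a) ∨
      Bornology.IsBounded (connectedComponentIn Kᶜ b) := by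
  obtain ⟨R, hR, hKR⟩ := hK.subset_closedBall_lt 0 0
  by_contra! hunb
  have meets : ∀ c, ¬ Bornology.IsBounded (connectedComponentIn Kᶜ c) →
      ∃ y ∈ connectedComponentIn Kᶜ c, y ∈ (Metric.closedBall 0 R)ᶜ := fun c hc =>
    not_subset.1 fun hsub => hc (Metric.isBounded_closedBall.subset hsub)
  obtain ⟨y, hya, hyR⟩ := meets a hunb.1
  obtain ⟨z, hzb, hzR⟩ := meets b hunb.2
  have hyz : z ∈ connectedComponentIn Kᶜ y :=
    (isPreconnected_compl_closedBall_zero hE hR.le).subset_connectedComponentIn hyR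
      (compl_subset_compl.2 hKR) hzR
  rw [connectedComponentIn_eq hya, connectedComponentIn_eq hzb, connectedComponentIn_eq hyz] at hab
  exact hab rfl

end BoundedComponents

section ContinuousLogarithms

variable {X : Type*} [TopologicalSpace X] {φ ψ h h₁ h₂ : X → ℂ} {S T A B : Set X}

/-- `h` is a continuous branch of the logarithm of `φ` on `S`. Both functions are total, and their
values outside `S` are irrelevant. -/
structure IsLogOn (h φ : X → ℂ) (S : Set X) : Prop where
  continuousOn : ContinuousOn h S
  exp_eq : ∀ z ∈ S, Complex.exp (h z) = φ z

/-- `φ` admits a continuous logarithm on `S`; this is the obstruction by which plane sets are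
shown to separate points. -/
def HasLogOn (φ : X → ℂ) (S : Set X) : Prop :=
  ∃ h : X → ℂ, IsLogOn h φ S

namespace IsLogOn

lemma mono (hh : IsLogOn h φ S) (hTS : T ⊆ S) : IsLogOn h φ T :=
  ⟨hh.continuousOn.mono hTS, fun z hz => hh.exp_eq z (hTS hz)⟩

lemma congr (hh : IsLogOn h₁ φ S) (heq : EqOn h₂ h₁ S) : IsLogOn h₂ φ S :=
  ⟨hh.continuousOn.congr heq, fun z hz => by rw [heq hz, hh.exp_eq z hz]⟩

lemma add_const (hh : IsLogOn h φ S) {c : ℂ} (hc : Complex.exp c = 1) :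
    IsLogOn (fun z => h z + c) φ S :=
  ⟨hh.continuousOn.add continuousOn_const, fun z hz => by
    rw [Complex.exp_add, hc, mul_one, hh.exp_eq z hz]⟩

lemma zpow_mul_zpow (hφ : IsLogOn h₁ φ S) (hψ : IsLogOn h₂ ψ S) (n m : ℤ) :
    IsLogOn (fun z => n * h₁ z + m * h₂ z) (fun z => φ z ^ n * ψ z ^ m) S where
  continuousOn :=
    (continuousOn_const.mul hφ.continuousOn).add (continuousOn_const.mul hψ.continuousOn)
  exp_eq z hz := by
    rw [Complex.exp_add, Complex.exp_int_mul, Complex.exp_int_mul, hφ.exp_eq z hz, hψ.exp_eq z hz]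

lemma union_of_isOpen (hA : IsLogOn h φ A) (hB : IsLogOn h φ B) (hAo : IsOpen A) (hBo : IsOpen B) :
    IsLogOn h φ (A ∪ B) :=
  ⟨hA.continuousOn.union_of_isOpen hB.continuousOn hAo hBo,
    fun z hz => hz.elim (hA.exp_eq z) (hB.exp_eq z)⟩

lemma union_of_isClosed (hA : IsLogOn h φ A) (hB : IsLogOn h φ B) (hAc : IsClosed A)
    (hBc : IsClosed B) : IsLogOn h φ (A ∪ B) :=
  ⟨hA.continuousOn.union_of_isClosed hB.continuousOn hAc hBc,
    fun z hz => hz.elim (hA.exp_eq z) (hB.exp_eq z)⟩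

lemma exists_common (hA : IsLogOn h₁ φ A) (hB : IsLogOn h₂ φ B) (heq : EqOn h₁ h₂ (A ∩ B)) :
    ∃ h : X → ℂ, IsLogOn h φ A ∧ IsLogOn h φ B := by
  classical
  refine ⟨A.piecewise h₁ h₂, hA.congr (piecewise_eqOn A h₁ h₂), hB.congr fun z hzB => ?_⟩
  by_cases hzA : z ∈ A
  · rw [piecewise_eq_of_mem A _ _ hzA, heq ⟨hzA, hzB⟩]
  · rw [piecewise_eq_of_notMem A _ _ hzA]

lemma eqOn_of_isPreconnected (hS : IsPreconnected S) (hh₁ : IsLogOn h₁ φ S) (hh₂ : IsLogOn h₂ φ S)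
    {a : X} (ha : a ∈ S) (heq : h₁ a = h₂ a) : EqOn h₁ h₂ S :=
  Complex.isCoveringMap_exp.eqOn_of_comp_eqOn hS hh₁.continuousOn hh₂.continuousOn
    (fun z hz => Subtype.ext ((hh₁.exp_eq z hz).trans (hh₂.exp_eq z hz).symm)) ha heq

lemma exists_eq_add_const (hS : IsPreconnected S) (hh₁ : IsLogOn h₁ φ S) (hh₂ : IsLogOn h₂ φ S) :
    ∃ c, Complex.exp c = 1 ∧ EqOn h₁ (fun z => h₂ z + c) S := by
  rcases S.eq_empty_or_nonempty with rfl | ⟨a, ha⟩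
  · exact ⟨0, Complex.exp_zero, eqOn_empty _ _⟩
  have hc : Complex.exp (h₁ a - h₂ a) = 1 := by
    rw [Complex.exp_sub, hh₁.exp_eq a ha, ← hh₂.exp_eq a ha, div_self (Complex.exp_ne_zero _)]
  exact ⟨_, hc, hh₁.eqOn_of_isPreconnected hS (hh₂.add_const hc) ha (by ring)⟩

lemma sub_eq_sub_of_comp {Y : Type*} [TopologicalSpace Y] [PreconnectedSpace Y] (hh : IsLogOn h φ S)
    {γ : Y → X} (hγ : Continuous γ) (hγS : ∀ t, γ t ∈ S) {k : Y → ℂ}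
    (hk : IsLogOn k (φ ∘ γ) univ) (s t : Y) : k s - k t = h (γ s) - h (γ t) := by
  have hcomp : IsLogOn (h ∘ γ) (φ ∘ γ) univ :=
    ⟨(hh.continuousOn.comp_continuous hγ hγS).continuousOn, fun t _ => hh.exp_eq _ (hγS t)⟩
  obtain ⟨c, -, hc⟩ := hk.exists_eq_add_const isPreconnected_univ hcomp
  rw [hc (mem_univ s), hc (mem_univ t), add_sub_add_right_eq_sub, Function.comp, Function.comp]

end IsLogOn

namespace HasLogOn

lemma mono (hφ : HasLogOn φ S) (hTS : T ⊆ S) : HasLogOn φ T :=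
  hφ.imp fun _ hh => hh.mono hTS

lemma congr (hφ : HasLogOn φ S) (heq : EqOn ψ φ S) : HasLogOn ψ S :=
  hφ.imp fun _ hh => ⟨hh.continuousOn, fun z hz => (hh.exp_eq z hz).trans (heq hz).symm⟩

lemma ne_zero (hφ : HasLogOn φ S) {z : X} (hz : z ∈ S) : φ z ≠ 0 := by
  obtain ⟨h, hh⟩ := hφ
  exact hh.exp_eq z hz ▸ Complex.exp_ne_zero _

lemma union_of_isPreconnected_inter (hA : HasLogOn φ A) (hB : HasLogOn φ B) (hAo : IsOpen A)
    (hBo : IsOpen B) (hAB : IsPreconnected (A ∩ B)) : HasLogOn φ (A ∪ B) := by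
  obtain ⟨l, hl⟩ := hA
  obtain ⟨k, hk⟩ := hB
  obtain ⟨c, hc, heq⟩ :=
    (hl.mono inter_subset_left).exists_eq_add_const hAB (hk.mono inter_subset_right)
  obtain ⟨h, hhA, hhB⟩ := hl.exists_common (hk.add_const hc) heq
  exact ⟨h, hhA.union_of_isOpen hhB hAo hBo⟩

lemma exists_isLogOn_eq_at_and_eq_add_int (hA : HasLogOn φ A) (hB : HasLogOn φ B) {p q : X}
    (hp : p ∈ A ∩ B) (hq : q ∈ A ∩ B) :
    ∃ (l k : X → ℂ) (d : ℤ), IsLogOn l φ A ∧ IsLogOn k φ B ∧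
      l p = k p ∧ l q = k q + d * (2 * Real.pi * Complex.I) := by
  obtain ⟨l, hl⟩ := hA
  obtain ⟨k, hk⟩ := hB
  have hdiff : ∀ z ∈ A ∩ B, ∃ d : ℤ, l z = k z + d * (2 * Real.pi * Complex.I) := fun z hz =>
    Complex.exp_eq_exp_iff_exists_int.1 ((hl.exp_eq z hz.1).trans (hk.exp_eq z hz.2).symm)
  obtain ⟨i, hi⟩ := hdiff p hp
  obtain ⟨j, hj⟩ := hdiff q hq
  refine ⟨l, _, j - i, hl, hk.add_const (Complex.exp_int_mul_two_pi_mul_I i), hi, ?_⟩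
  rw [hj]
  push_cast
  ring

/- The mismatch of the logarithms of `φ` at `q`, once they agree at `p`, is an integer multiple of
`2πi`, and likewise for `ψ`; two integers satisfy a nontrivial linear relation. -/
lemma exists_zpow_mul_zpow_union {p q : X} (hAc : IsClosed A) (hBc : IsClosed B)
    (hAB : A ∩ B = {p, q}) (hφA : HasLogOn φ A) (hφB : HasLogOn φ B) (hψA : HasLogOn ψ A)
    (hψB : HasLogOn ψ B) :
    ∃ n m : ℤ, (n ≠ 0 ∨ m ≠ 0) ∧ HasLogOn (fun z => φ z ^ n * ψ z ^ m) (A ∪ B) := by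
  have hp : p ∈ A ∩ B := hAB ▸ mem_insert p {q}
  have hq : q ∈ A ∩ B := hAB ▸ mem_insert_of_mem p rfl
  obtain ⟨l, k, d, hl, hk, hlkp, hlkq⟩ := hφA.exists_isLogOn_eq_at_and_eq_add_int hφB hp hq
  obtain ⟨l', k', d', hl', hk', hlkp', hlkq'⟩ :=
    hψA.exists_isLogOn_eq_at_and_eq_add_int hψB hp hq
  obtain ⟨n, m, hnm, hrel⟩ : ∃ n m : ℤ, (n ≠ 0 ∨ m ≠ 0) ∧ n * d + m * d' = 0 := by
    by_cases hd : d = 0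
    · exact ⟨1, 0, Or.inl one_ne_zero, by simp [hd]⟩
    · exact ⟨d', -d, Or.inr (neg_ne_zero.2 hd), by ring⟩
  have hrel' : (n * d + m * d' : ℂ) = 0 := mod_cast hrel
  obtain ⟨h, hhA, hhB⟩ := (hl.zpow_mul_zpow hl' n m).exists_common (hk.zpow_mul_zpow hk' n m) (by
    rw [hAB]
    rintro z (rfl | rfl)
    · simp only [hlkp, hlkp']
    · simp only [hlkq, hlkq']
      linear_combination (2 * Real.pi * Complex.I) * hrel')
  exact ⟨n, m, hnm, h, hhA.union_of_isClosed hhB hAc hBc⟩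

end HasLogOn

lemma hasLogOn_range_of_isEmbedding {Y : Type*} [TopologicalSpace Y] {α : Y → X}
    (hα : IsEmbedding α) {k : Y → ℂ} (hk : Continuous k)
    (hexp : ∀ y, Complex.exp (k y) = φ (α y)) : HasLogOn φ (range α) := by
  have hextend : ∀ y, Function.extend α k 0 (α y) = k y := hα.injective.extend_apply k 0
  refine ⟨Function.extend α k 0, ?_, ?_⟩
  · rintro _ ⟨y, rfl⟩
    rw [ContinuousWithinAt, ← hα.isInducing.map_nhds_eq, Filter.tendsto_map'_iff, hextend]
    exact (hk.tendsto y).congr fun y => (hextend y).symm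
  · rintro _ ⟨y, rfl⟩
    rw [hextend, hexp]

lemma HasLogOn.of_homotopy {H : I → X → ℂ} (hH : ContinuousOn (Function.uncurry H) (univ ×ˢ S))
    (hne : ∀ t, ∀ z ∈ S, H t z ≠ 0) (h0 : HasLogOn (H 0) S) : HasLogOn (H 1) S := by
  obtain ⟨l, hl⟩ := h0
  let HS : C(I × S, {w : ℂ // w ≠ 0}) :=
    ⟨fun x => ⟨H x.1 x.2, hne x.1 x.2 x.2.2⟩, Continuous.subtype_mk
      (hH.comp_continuous (f := fun x : I × S => (x.1, (x.2 : X))) (by fun_prop) (by simp)) _⟩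
  let lS : C(S, ℂ) := ⟨S.domRestrict l, hl.continuousOn.domRestrict⟩
  have hstart : ∀ z : S, HS (0, z) = ⟨Complex.exp (lS z), Complex.exp_ne_zero _⟩ := fun z =>
    Subtype.ext (hl.exp_eq z z.2).symm
  have hlift := Complex.isCoveringMap_exp.liftHomotopy_lifts HS lS hstart
  have hrange : HasLogOn (H 1) (range ((↑) : S → X)) := hasLogOn_range_of_isEmbedding .subtypeVal
    (k := fun z => Complex.isCoveringMap_exp.liftHomotopy HS lS hstart (1, z)) (by fun_prop)
    fun z => congrArg Subtype.val (congrFun hlift (1, z))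
  rwa [Subtype.range_coe] at hrange

lemma hasLogOn_univ_of_contractibleSpace [ContractibleSpace X] (hφ : Continuous φ)
    (hne : ∀ x, φ x ≠ 0) : HasLogOn φ univ := by
  obtain ⟨x₀, ⟨F⟩⟩ := id_nullhomotopic X
  have hconst : HasLogOn (fun _ : X => φ x₀) univ :=
    ⟨fun _ => Complex.log (φ x₀), continuousOn_const, fun _ _ => Complex.exp_log (hne x₀)⟩
  have hend := HasLogOn.of_homotopy (H := fun t x => φ (F.symm (t, x))) (S := univ)
    (hφ.comp F.symm.continuous).continuousOn (fun t x _ => hne _) (by simpa using hconst)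
  simpa using hend

lemma hasLogOn_range_of_contractibleSpace {Y : Type*} [TopologicalSpace Y] [ContractibleSpace Y]
    {α : Y → X} (hα : IsEmbedding α) (hφ : ContinuousOn φ (range α))
    (hne : ∀ z ∈ range α, φ z ≠ 0) : HasLogOn φ (range α) := by
  obtain ⟨k, hk⟩ := hasLogOn_univ_of_contractibleSpace
    (hφ.comp_continuous hα.continuous mem_range_self) fun y => hne _ (mem_range_self y)
  exact hasLogOn_range_of_isEmbedding hα (continuousOn_univ.1 hk.continuousOn)
    fun y => hk.exp_eq y (mem_univ y)

/- Two paths with the same endpoints lie in a compact set, on which a logarithm exists, so lifting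
along paths is well defined. -/
lemma hasLogOn_univ_of_forall_isCompact [PathConnectedSpace X] [LocallyPathConnectedSpace X]
    (hφ : Continuous φ) (hcompact : ∀ K, IsCompact K → HasLogOn φ K) : HasLogOn φ univ := by
  have hne : ∀ x, φ x ≠ 0 := fun x => (hcompact {x} isCompact_singleton).ne_zero rfl
  let f : C(X, {w : ℂ // w ≠ 0}) := ⟨fun x => ⟨φ x, hne x⟩, hφ.subtype_mk hne⟩
  obtain ⟨x₀⟩ : Nonempty X := inferInstance
  have hlog : (⟨Complex.exp (Complex.log (φ x₀)), Complex.exp_ne_zero _⟩ : {w : ℂ // w ≠ 0}) =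
      f x₀ := Subtype.ext (Complex.exp_log (hne x₀))
  obtain ⟨F, ⟨-, hF⟩, -⟩ :=
    Complex.isCoveringMap_exp.isLocalHomeomorph.existsUnique_continuousMap_lifts f x₀
      (Complex.log (φ x₀)) hlog
      (fun γ hγ => by
        simpa [and_comm] using Complex.isCoveringMap_exp.exists_path_lifts (f.comp γ) _
          (by simp [hγ, hlog]))
      (fun γ γ' Γ Γ' hγ hγ' hΓ hΓ' hlift hlift' hend => by
        obtain ⟨l, hl⟩ := hcompact (range γ ∪ range γ')
          ((isCompact_range γ.continuous).union (isCompact_range γ'.continuous))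
        have hΓlog : IsLogOn Γ (φ ∘ γ) univ :=
          ⟨Γ.continuous.continuousOn, fun t _ => congrArg Subtype.val (congrFun hlift t)⟩
        have hΓlog' : IsLogOn Γ' (φ ∘ γ') univ :=
          ⟨Γ'.continuous.continuousOn, fun t _ => congrArg Subtype.val (congrFun hlift' t)⟩
        have hsub := hl.sub_eq_sub_of_comp γ.continuous (fun t => .inl ⟨t, rfl⟩) hΓlog 1 0
        have hsub' := hl.sub_eq_sub_of_comp γ'.continuous (fun t => .inr ⟨t, rfl⟩) hΓlog' 1 0
        rw [hΓ, hγ, hend] at hsub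
        rw [hΓ', hγ'] at hsub'
        exact sub_left_injective (hsub.trans hsub'.symm))
  exact ⟨F, F.continuous.continuousOn, fun x _ => congrArg Subtype.val (congrFun hF x)⟩

lemma hasLogOn_of_forall_isCompact [LocallyPathConnectedSpace X] (hS : IsOpen S)
    (hSc : IsPreconnected S) (hφ : ContinuousOn φ S)
    (hcompact : ∀ K ⊆ S, IsCompact K → HasLogOn φ K) : HasLogOn φ S := by
  rcases S.eq_empty_or_nonempty with rfl | hne
  · exact hcompact ∅ subset_rfl isCompact_empty
  have : PathConnectedSpace S :=
    isPathConnected_iff_pathConnectedSpace.1 (hS.isConnected_iff_isPathConnected.1 ⟨hne, hSc⟩)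
  have : LocallyPathConnectedSpace S := hS.locallyPathConnectedSpace
  obtain ⟨k, hk⟩ := hasLogOn_univ_of_forall_isCompact (φ := fun z : S => φ z) hφ.domRestrict
    fun K hK => by
      obtain ⟨l, hl⟩ := hcompact ((↑) '' K) (Subtype.coe_image_subset S K)
        (hK.image continuous_subtype_val)
      exact ⟨fun z => l z, hl.continuousOn.comp continuous_subtype_val.continuousOn
        (mapsTo_image _ K), fun z hz => hl.exp_eq z (mem_image_of_mem _ hz)⟩
  have hrange : HasLogOn φ (range ((↑) : S → X)) := hasLogOn_range_of_isEmbedding .subtypeVal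
    (continuousOn_univ.1 hk.continuousOn) fun z => hk.exp_eq z (mem_univ z)
  rwa [Subtype.range_coe] at hrange

end ContinuousLogarithms

section Degree

variable {K : Set ℂ} {a : ℂ} {G : ℂ → ℂ} {n : ℤ}

lemma exists_continuous_ne_zero_eqOn_compl {X : Type*} [TopologicalSpace X] [NormalSpace X]
    {C : Set X} {φ G : X → ℂ} (hC : IsClosed C) (hφ : ContinuousOn φ (closure Cᶜ))
    (hφ0 : ∀ z ∈ Cᶜ, φ z ≠ 0) (hG : ContinuousOn G C) (hG0 : ∀ z ∈ C, G z ≠ 0)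
    (hlog : HasLogOn (fun z => φ z * G z) (frontier C)) :
    ∃ F : X → ℂ, Continuous F ∧ (∀ z, F z ≠ 0) ∧ EqOn F φ Cᶜ := by
  classical
  obtain ⟨h, hh⟩ := hlog
  obtain ⟨H, hH⟩ := ContinuousMap.exists_restrict_eq isClosed_frontier
    ⟨(frontier C).domRestrict h, hh.continuousOn.domRestrict⟩
  have hHh : ∀ z ∈ frontier C, H z = h z := fun z hz => congrArg (fun f => f ⟨z, hz⟩) hH
  refine ⟨C.piecewise (fun z => Complex.exp (H z) / G z) φ, ?_, fun z => ?_,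
    C.piecewise_eqOn_compl _ _⟩
  · refine continuous_piecewise (fun z hz => ?_) ?_ hφ
    · rw [hHh z hz, hh.exp_eq z hz, mul_div_cancel_right₀ _ (hG0 z (hC.frontier_subset hz))]
    · rw [hC.closure_eq]
      exact (by fun_prop : Continuous fun z => Complex.exp (H z)).continuousOn.div hG hG0
  · by_cases hz : z ∈ C
    · rw [piecewise_eq_of_mem C _ _ hz]
      exact div_ne_zero (Complex.exp_ne_zero _) (hG0 z hz)
    · rw [piecewise_eq_of_notMem C _ _ hz]
      exact hφ0 z hz

lemma eq_zero_of_hasLogOn_zpow_sphere {R : ℝ} (hR : 0 < R)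
    (hlog : HasLogOn (fun z => (z - a) ^ n) (Metric.sphere a R)) : n = 0 := by
  obtain ⟨l, hl⟩ := hlog
  have hcircle : ∀ θ : ℝ, (circleMap a R θ - a) ^ n =
      Complex.exp (n * (Real.log R + θ * Complex.I)) := fun θ => by
    rw [Complex.exp_int_mul, Complex.exp_add, ← Complex.ofReal_exp, Real.exp_log hR,
      circleMap_sub_center, circleMap_zero]
  have hangle : IsLogOn (fun θ : ℝ => (n * (Real.log R + θ * Complex.I) : ℂ))
      ((fun z => (z - a) ^ n) ∘ circleMap a R) univ :=
    ⟨by fun_prop, fun θ _ => (hcircle θ).symm⟩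
  have hturn := hl.sub_eq_sub_of_comp (continuous_circleMap a R)
    (circleMap_mem_sphere a hR.le) hangle (2 * Real.pi) 0
  have hperiod : circleMap a R (2 * Real.pi) = circleMap a R 0 := by
    simpa using periodic_circleMap a R 0
  rw [hperiod, sub_self] at hturn
  simpa [Real.pi_ne_zero, sub_eq_zero] using hturn

lemma eq_zero_of_hasLogOn_frontier {C : Set ℂ} (hC : IsClosed C) (hCb : Bornology.IsBounded C)
    (ha : a ∈ interior C) (hG : ContinuousOn G C) (hG0 : ∀ z ∈ C, G z ≠ 0)
    (hlog : HasLogOn (fun z => (z - a) ^ n * G z) (frontier C)) : n = 0 := by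
  have hsub : ∀ z ∈ closure Cᶜ, z - a ≠ 0 := fun z hz => by
    rw [closure_compl] at hz
    exact sub_ne_zero.2 fun hza => hz (hza ▸ ha)
  obtain ⟨F, hF, hF0, hFeq⟩ := exists_continuous_ne_zero_eqOn_compl hC
    (φ := fun z => (z - a) ^ n) (fun z hz => ((continuousAt_id.sub continuousAt_const).zpow₀ n
      (.inl (hsub z hz))).continuousWithinAt)
    (fun z hz => zpow_ne_zero n (hsub z (subset_closure hz))) hG hG0 hlog
  obtain ⟨R, hR, hCR⟩ := hCb.subset_ball_lt 0 a
  refine eq_zero_of_hasLogOn_zpow_sphere (a := a) hR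
    (((hasLogOn_univ_of_contractibleSpace hF hF0).mono (subset_univ _)).congr fun z hz => ?_)
  exact (hFeq fun hzC => (Metric.mem_ball.1 (hCR hzC)).ne hz).symm

lemma eq_zero_of_hasLogOn_of_isBounded_connectedComponentIn (hK : IsClosed K) (ha : a ∉ K)
    (hbdd : Bornology.IsBounded (connectedComponentIn Kᶜ a))
    (hG : ContinuousOn G (closure (connectedComponentIn Kᶜ a)))
    (hG0 : ∀ z ∈ closure (connectedComponentIn Kᶜ a), G z ≠ 0)
    (hlog : HasLogOn (fun z => (z - a) ^ n * G z) K) : n = 0 := by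
  refine eq_zero_of_hasLogOn_frontier isClosed_closure hbdd.closure ?_ hG hG0 (hlog.mono ?_)
  · exact interior_mono subset_closure
      (hK.isOpen_compl.connectedComponentIn.interior_eq.symm ▸ mem_connectedComponentIn ha)
  · exact frontier_closure_subset.trans
      ((frontier_connectedComponentIn_subset_compl hK.isOpen_compl a).trans_eq (compl_compl K))

end Degree

section Separation

variable {A B K S U χ Γ : Set ℂ} {a b c p q : ℂ}

lemma continuousOn_sub_div_sub (hb : b ∉ S) : ContinuousOn (fun z => (z - a) / (z - b)) S :=
  (by fun_prop : Continuous fun z => z - a).continuousOn.div (by fun_prop) fun z hz =>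
    sub_ne_zero.2 (ne_of_mem_of_not_mem hz hb)

lemma hasLogOn_sub_div_sub_of_joinedIn (hab : JoinedIn Sᶜ b a) :
    HasLogOn (fun z => (z - a) / (z - b)) S := by
  obtain ⟨γ, hγ⟩ := hab
  have hγne : ∀ t, ∀ z ∈ S, z - γ t ≠ 0 := fun t z hz =>
    sub_ne_zero.2 (ne_of_mem_of_not_mem hz (hγ t))
  have hbne : ∀ z ∈ S, z - b ≠ 0 := by simpa using hγne 0
  have hstart : HasLogOn (fun z => (z - γ 0) / (z - b)) S :=
    ⟨0, continuousOn_const, fun z hz => by simp [div_self (hbne z hz)]⟩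
  have hend := HasLogOn.of_homotopy (H := fun t z => (z - γ t) / (z - b))
    ((by fun_prop : Continuous fun x : I × ℂ => x.2 - γ x.1).continuousOn.div (by fun_prop)
      fun x hx => hbne x.2 hx.2)
    (fun t z hz => div_ne_zero (hγne t z hz) (hbne z hz)) hstart
  simpa using hend

lemma hasLogOn_sub_div_sub_of_isPreconnected (hΓ : IsPreconnected Γ) (hp : p ∈ Γ) (hq : q ∈ Γ)
    (hU : IsOpen U) (hUc : IsPreconnected U) (hUΓ : Disjoint U Γ) :
    HasLogOn (fun z => (z - p) / (z - q)) U := by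
  refine hasLogOn_of_forall_isCompact hU hUc
    (continuousOn_sub_div_sub (hUΓ.notMem_of_mem_right hq)) fun K hKU hK => ?_
  exact hasLogOn_sub_div_sub_of_joinedIn (joinedIn_of_isPreconnected_subset hΓ
    hK.isClosed.isOpen_compl (hUΓ.mono_left hKU).subset_compl_left hq hp)

lemma not_hasLogOn_sub_div_sub_compl_pair (hpq : p ≠ q) :
    ¬ HasLogOn (fun z => (z - p) / (z - q)) {p, q}ᶜ := fun hlog => by
  have hr : 0 < dist p q / 2 := half_pos (dist_pos.2 hpq)
  have hsub : ∀ z ∈ Metric.closedBall p (dist p q / 2), z - q ≠ 0 := fun z hz => by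
    refine sub_ne_zero.2 fun hzq => ?_
    rw [hzq, Metric.mem_closedBall'] at hz
    linarith
  refine one_ne_zero (α := ℤ) (eq_zero_of_hasLogOn_frontier (a := p) (G := fun z => (z - q)⁻¹)
    Metric.isClosed_closedBall Metric.isBounded_closedBall ?_
    (ContinuousOn.inv₀ (by fun_prop) hsub) (fun z hz => inv_ne_zero (hsub z hz)) ?_)
  · rw [interior_closedBall p hr.ne']
    exact Metric.mem_ball_self hr
  · simp only [zpow_one, ← div_eq_mul_inv]
    rw [frontier_closedBall p hr.ne']
    refine hlog.mono fun z hz => ?_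
    rintro (rfl | rfl)
    · simp [hr.ne] at hz
    · exact hsub z (Metric.sphere_subset_closedBall hz) (sub_self z)

lemma not_isPreconnected_diff_of_joinedIn (hΓ : IsPreconnected Γ) (hp : p ∈ Γ) (hq : q ∈ Γ)
    (hpq : p ≠ q) (hU : IsOpen U) (hUc : IsPreconnected U) (hUΓ : Disjoint U Γ)
    (hχ : IsClosed χ) (hχpq : JoinedIn χ q p) (hχU : χ ⊆ U ∪ {p, q}) :
    ¬ IsPreconnected (U \ χ) := fun hdiff => by
  have hlogU := hasLogOn_sub_div_sub_of_isPreconnected hΓ hp hq hU hUc hUΓ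
  have hlogχ : HasLogOn (fun z => (z - p) / (z - q)) χᶜ :=
    hasLogOn_sub_div_sub_of_joinedIn ((compl_compl χ).symm ▸ hχpq)
  refine not_hasLogOn_sub_div_sub_compl_pair hpq ((hlogU.union_of_isPreconnected_inter hlogχ hU
    hχ.isOpen_compl hdiff).mono fun z hz => ?_)
  by_cases hzχ : z ∈ χ
  · exact .inl ((hχU hzχ).resolve_right hz)
  · exact .inr hzχ

lemma exponent_eq_zero_of_isBounded_connectedComponentIn (hK : IsClosed K) {i j k : ℤ} (ha : a ∉ K)
    (hb : b ∉ K) (hc : c ∉ K) (hab : connectedComponentIn Kᶜ a ≠ connectedComponentIn Kᶜ b)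
    (hac : connectedComponentIn Kᶜ a ≠ connectedComponentIn Kᶜ c)
    (hlog : HasLogOn (fun z => (z - a) ^ i * ((z - b) ^ j * (z - c) ^ k)) K)
    (hbdd : Bornology.IsBounded (connectedComponentIn Kᶜ a)) : i = 0 := by
  have hbne : ∀ z ∈ closure (connectedComponentIn Kᶜ a), z - b ≠ 0 := fun z hz =>
    sub_ne_zero.2 (ne_of_mem_of_not_mem hz (notMem_closure_connectedComponentIn hb hab))
  have hcne : ∀ z ∈ closure (connectedComponentIn Kᶜ a), z - c ≠ 0 := fun z hz =>
    sub_ne_zero.2 (ne_of_mem_of_not_mem hz (notMem_closure_connectedComponentIn hc hac))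
  refine eq_zero_of_hasLogOn_of_isBounded_connectedComponentIn hK ha hbdd ?_ ?_ hlog
  · exact (ContinuousOn.zpow₀ (by fun_prop) j fun z hz => .inl (hbne z hz)).mul
      (ContinuousOn.zpow₀ (by fun_prop) k fun z hz => .inl (hcne z hz))
  · exact fun z hz => mul_ne_zero (zpow_ne_zero j (hbne z hz)) (zpow_ne_zero k (hcne z hz))

lemma exponents_eq_zero_of_connectedComponentIn_compl_ne (hK : IsCompact K) {i j k : ℤ}
    (hsum : i + j + k = 0) (ha : a ∉ K) (hb : b ∉ K) (hc : c ∉ K)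
    (hab : connectedComponentIn Kᶜ a ≠ connectedComponentIn Kᶜ b)
    (hca : connectedComponentIn Kᶜ c ≠ connectedComponentIn Kᶜ a)
    (hcb : connectedComponentIn Kᶜ c ≠ connectedComponentIn Kᶜ b)
    (hlog : HasLogOn (fun z => (z - a) ^ i * (z - b) ^ j * (z - c) ^ k) K) :
    i = 0 ∧ j = 0 ∧ k = 0 := by
  have hi := exponent_eq_zero_of_isBounded_connectedComponentIn (i := i) (j := j) (k := k)
    hK.isClosed ha hb hc hab hca.symm (hlog.congr fun z _ => by ring)
  have hj := exponent_eq_zero_of_isBounded_connectedComponentIn (i := j) (j := i) (k := k)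
    hK.isClosed hb ha hc hab.symm hcb.symm (hlog.congr fun z _ => by ring)
  have hk := exponent_eq_zero_of_isBounded_connectedComponentIn (i := k) (j := i) (k := j)
    hK.isClosed hc ha hb hca hcb (hlog.congr fun z _ => by ring)
  have hrank : 1 < Module.rank ℝ ℂ := by simp
  have hij := (isBounded_connectedComponentIn_compl_or hrank hK.isBounded hab).imp hi hj
  have hki := (isBounded_connectedComponentIn_compl_or hrank hK.isBounded hca).imp hk hi
  have hkj := (isBounded_connectedComponentIn_compl_or hrank hK.isBounded hcb).imp hk hj
  lia

lemma connectedComponentIn_compl_union_eq_or (hA : IsCompact A) (hB : IsCompact B)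
    (hAB : A ∩ B = {p, q}) (ha : a ∉ A ∪ B) (hb : b ∉ A ∪ B) (hc : c ∉ A ∪ B)
    (haA : HasLogOn (fun z => (z - a) / (z - c)) A) (haB : HasLogOn (fun z => (z - a) / (z - c)) B)
    (hbA : HasLogOn (fun z => (z - b) / (z - c)) A)
    (hbB : HasLogOn (fun z => (z - b) / (z - c)) B) :
    connectedComponentIn (A ∪ B)ᶜ a = connectedComponentIn (A ∪ B)ᶜ b ∨
      connectedComponentIn (A ∪ B)ᶜ c = connectedComponentIn (A ∪ B)ᶜ a ∨
      connectedComponentIn (A ∪ B)ᶜ c = connectedComponentIn (A ∪ B)ᶜ b := by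
  by_contra! hne
  obtain ⟨n, m, hnm, hlog⟩ :=
    HasLogOn.exists_zpow_mul_zpow_union hA.isClosed hB.isClosed hAB haA haB hbA hbB
  have hlog' : HasLogOn (fun z => (z - a) ^ n * (z - b) ^ m * (z - c) ^ (-n - m)) (A ∪ B) :=
    hlog.congr fun z hz => by
      have hzc : z - c ≠ 0 := sub_ne_zero.2 (ne_of_mem_of_not_mem hz hc)
      simp only [div_zpow, zpow_sub₀ hzc, zpow_neg]
      field
  have hzero := exponents_eq_zero_of_connectedComponentIn_compl_ne (hA.union hB) (by ring) ha hb hc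
    hne.1 hne.2.1 hne.2.2 hlog'
  lia

lemma hasLogOn_sub_div_sub_range {Y : Type*} [TopologicalSpace Y] [ContractibleSpace Y] {g : Y → ℂ}
    (hg : IsEmbedding g) (ha : a ∉ range g) (hb : b ∉ range g) :
    HasLogOn (fun z => (z - a) / (z - b)) (range g) :=
  hasLogOn_range_of_contractibleSpace hg (continuousOn_sub_div_sub hb) fun _ hz =>
    div_ne_zero (sub_ne_zero.2 (ne_of_mem_of_not_mem hz ha))
      (sub_ne_zero.2 (ne_of_mem_of_not_mem hz hb))

end Separation

section Chords

variable {X : Type*} [TopologicalSpace X] {Γ : Set X} {g : I → X}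

/-- `g` parametrizes a chord of `Γ`: a Jordan arc that meets `Γ` precisely in its endpoints. -/
structure IsChord (g : I → X) (Γ : Set X) : Prop where
  continuous : Continuous g
  injective : Function.Injective g
  zero_mem : g 0 ∈ Γ
  one_mem : g 1 ∈ Γ
  notMem : ∀ t, t ≠ 0 → t ≠ 1 → g t ∉ Γ

namespace IsChord

lemma comp_homeomorph {Y : Type*} [TopologicalSpace Y] (hg : IsChord g Γ) (e : X ≃ₜ Y) :
    IsChord (e ∘ g) (e '' Γ) where
  continuous := e.continuous.comp hg.continuous
  injective := e.injective.comp hg.injective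
  zero_mem := mem_image_of_mem e hg.zero_mem
  one_mem := mem_image_of_mem e hg.one_mem
  notMem t ht0 ht1 := e.injective.mem_set_image.not.2 (hg.notMem t ht0 ht1)

lemma mem_iff (hg : IsChord g Γ) (t : I) : g t ∈ Γ ↔ t = 0 ∨ t = 1 := by
  refine ⟨fun ht => ?_, ?_⟩
  · by_contra! hne
    exact hg.notMem t hne.1 hne.2 ht
  · rintro (rfl | rfl)
    exacts [hg.zero_mem, hg.one_mem]

lemma inter_range (hg : IsChord g Γ) : Γ ∩ range g = {g 0, g 1} := by
  ext x
  constructor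
  · rintro ⟨hx, t, rfl⟩
    exact ((hg.mem_iff t).1 hx).imp (congrArg g) (congrArg g)
  · rintro (rfl | rfl)
    exacts [⟨hg.zero_mem, mem_range_self 0⟩, ⟨hg.one_mem, mem_range_self 1⟩]

lemma isPreconnected_range_diff (hg : IsChord g Γ) : IsPreconnected (range g \ Γ) := by
  have hinterior : range g \ Γ = g '' Ioo 0 1 := by
    ext x
    constructor
    · rintro ⟨⟨t, rfl⟩, ht⟩
      rw [hg.mem_iff, not_or] at ht
      exact ⟨t, ⟨unitInterval.pos_iff_ne_zero.2 ht.1, unitInterval.lt_one_iff_ne_one.2 ht.2⟩, rfl⟩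
    · rintro ⟨t, ht, rfl⟩
      exact ⟨mem_range_self t, hg.notMem t ht.1.ne' ht.2.ne⟩
  rw [hinterior]
  exact isPreconnected_Ioo.image g hg.continuous.continuousOn

lemma exists_range_diff_subset_connectedComponentIn (hg : IsChord g Γ) :
    ∃ y₀ ∉ Γ, range g \ Γ ⊆ connectedComponentIn Γᶜ y₀ := by
  obtain ⟨t, ht⟩ : (Ioo (0 : I) 1).Nonempty := nonempty_Ioo.2 zero_lt_one
  have hgt : g t ∉ Γ := hg.notMem t ht.1.ne' ht.2.ne
  exact ⟨g t, hgt, hg.isPreconnected_range_diff.subset_connectedComponentIn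
    ⟨mem_range_self t, hgt⟩ fun _ hx => hx.2⟩

lemma joinedIn_range (hg : IsChord g Γ) : JoinedIn (range g) (g 0) (g 1) :=
  ⟨⟨⟨g, hg.continuous⟩, rfl, rfl⟩, mem_range_self⟩

end IsChord

end Chords

section PlaneChords

variable {Γ : Set ℂ} {g : I → ℂ} {y₀ : ℂ}

namespace IsChord

lemma not_isPreconnected_diff_range (hg : IsChord g Γ) (hΓ : IsClosed Γ) (hΓc : IsPreconnected Γ)
    (hsub : range g \ Γ ⊆ connectedComponentIn Γᶜ y₀) :
    ¬ IsPreconnected (connectedComponentIn Γᶜ y₀ \ range g) := by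
  refine not_isPreconnected_diff_of_joinedIn hΓc hg.zero_mem hg.one_mem
    (hg.injective.ne zero_ne_one) hΓ.isOpen_compl.connectedComponentIn
    isPreconnected_connectedComponentIn
    (disjoint_compl_left.mono_left (connectedComponentIn_subset _ _))
    (isCompact_range hg.continuous).isClosed hg.joinedIn_range.symm fun z hz => ?_
  by_cases hzΓ : z ∈ Γ
  · exact .inr (hg.inter_range ▸ ⟨hzΓ, hz⟩)
  · exact .inl (hsub ⟨hz, hzΓ⟩)

lemma connectedComponentIn_diff_range_eq_or (hg : IsChord g Γ) (hΓ : IsCompact Γ) {a b c : ℂ}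
    (ha : a ∈ connectedComponentIn Γᶜ y₀ \ range g)
    (hb : b ∈ connectedComponentIn Γᶜ y₀ \ range g)
    (hc : c ∈ connectedComponentIn Γᶜ y₀ \ range g) :
    connectedComponentIn (connectedComponentIn Γᶜ y₀ \ range g) a =
        connectedComponentIn (connectedComponentIn Γᶜ y₀ \ range g) b ∨
      connectedComponentIn (connectedComponentIn Γᶜ y₀ \ range g) c =
        connectedComponentIn (connectedComponentIn Γᶜ y₀ \ range g) a ∨
      connectedComponentIn (connectedComponentIn Γᶜ y₀ \ range g) c =
        connectedComponentIn (connectedComponentIn Γᶜ y₀ \ range g) b := by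
  have hcompl : Γᶜ \ range g = (Γ ∪ range g)ᶜ := by rw [compl_union, sdiff_eq]
  have hnotMem : ∀ z ∈ connectedComponentIn Γᶜ y₀ \ range g, z ∉ Γ ∪ range g := fun z hz =>
    hcompl.subset ⟨connectedComponentIn_subset _ _ hz.1, hz.2⟩
  have hlogΓ : ∀ z ∈ connectedComponentIn Γᶜ y₀ \ range g,
      HasLogOn (fun w => (w - z) / (w - c)) Γ := fun z hz =>
    hasLogOn_sub_div_sub_of_joinedIn (joinedIn_of_isPreconnected_subset
      isPreconnected_connectedComponentIn hΓ.isClosed.isOpen_compl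
      (connectedComponentIn_subset _ _) hc.1 hz.1)
  have : ContractibleSpace I :=
    (convex_Icc (0 : ℝ) 1).contractibleSpace (nonempty_Icc.2 zero_le_one)
  have hembed : IsEmbedding g := (hg.continuous.isClosedEmbedding hg.injective).isEmbedding
  simp only [connectedComponentIn_connectedComponentIn_diff ha,
    connectedComponentIn_connectedComponentIn_diff hb,
    connectedComponentIn_connectedComponentIn_diff hc, hcompl]
  exact connectedComponentIn_compl_union_eq_or hΓ (isCompact_range hg.continuous) hg.inter_range
    (hnotMem a ha) (hnotMem b hb) (hnotMem c hc) (hlogΓ a ha)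
    (hasLogOn_sub_div_sub_range hembed ha.2 hc.2) (hlogΓ b hb)
    (hasLogOn_sub_div_sub_range hembed hb.2 hc.2)

lemma hasExactlyTwoComponents_diff_range (hg : IsChord g Γ) (hΓ : IsCompact Γ)
    (hΓc : IsPreconnected Γ) (hsub : range g \ Γ ⊆ connectedComponentIn Γᶜ y₀) :
    HasExactlyTwoComponents (connectedComponentIn Γᶜ y₀ \ range g) :=
  hasExactlyTwoComponents_of_not_isPreconnected
    (hg.not_isPreconnected_diff_range hΓ.isClosed hΓc hsub)
    fun _ ha _ hb _ hc => hg.connectedComponentIn_diff_range_eq_or hΓ ha hb hc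

end IsChord

end PlaneChords

theorem chord_divides_residual_domain_general {E : Type*} [NormedAddCommGroup E] [NormedSpace ℝ E]
    (hE : Module.finrank ℝ E = 2) {Γ : Set E} (hΓ : IsCompact Γ) (hΓc : IsPreconnected Γ)
    {g : I → E} (hg : IsChord g Γ) :
    ∃ y₀ ∉ Γ, range g \ Γ ⊆ connectedComponentIn Γᶜ y₀ ∧
      HasExactlyTwoComponents (connectedComponentIn Γᶜ y₀ \ range g) := by
  have : FiniteDimensional ℝ E := .of_finrank_pos (by lia)
  let e : E ≃ₜ ℂ :=
    (ContinuousLinearEquiv.ofFinrankEq (hE.trans Complex.finrank_real_complex.symm)).toHomeomorph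
  obtain ⟨y₀, hy₀, hsub⟩ := hg.exists_range_diff_subset_connectedComponentIn
  have himage : e '' connectedComponentIn Γᶜ y₀ = connectedComponentIn (e '' Γ)ᶜ (e y₀) := by
    rw [e.image_connectedComponentIn hy₀, image_compl_eq e.bijective]
  refine ⟨y₀, hy₀, hsub, .of_image e ?_⟩
  rw [image_sdiff e.injective, himage, ← range_comp]
  refine (hg.comp_homeomorph e).hasExactlyTwoComponents_diff_range (hΓ.image e.continuous)
    (hΓc.image e e.continuous.continuousOn) ?_
  rw [range_comp, ← image_sdiff e.injective, ← himage]
  exact image_mono hsub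

/-- A chord `χ` of a Jordan curve `Γ` in `ℝ²` divides one of the two residual domains of
`Γ` into exactly two subdomains. -/
theorem chord_divides_residual_domain
    (Γ χ : Set (Fin 2 → ℝ))
    (hΓ : ∃ f : Metric.sphere (0 : EuclideanSpace ℝ (Fin 2)) 1 → (Fin 2 → ℝ),
      Continuous f ∧ Function.Injective f ∧ Set.range f = Γ)
    (hχ : ∃ g : unitInterval → (Fin 2 → ℝ),
      Continuous g ∧ Function.Injective g ∧ Set.range g = χ ∧
      g 0 ∈ Γ ∧ g 1 ∈ Γ ∧ ∀ t : unitInterval, t ≠ 0 → t ≠ 1 → g t ∉ Γ) :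
    ∃ y₀ ∉ Γ,
      χ \ Γ ⊆ connectedComponentIn Γᶜ y₀ ∧
      ∃ V₁ V₂ : Set (Fin 2 → ℝ), V₁ ≠ V₂ ∧
        (∃ y₁ ∈ connectedComponentIn Γᶜ y₀ \ χ,
          V₁ = connectedComponentIn (connectedComponentIn Γᶜ y₀ \ χ) y₁) ∧
        (∃ y₂ ∈ connectedComponentIn Γᶜ y₀ \ χ,
          V₂ = connectedComponentIn (connectedComponentIn Γᶜ y₀ \ χ) y₂) ∧
        ∀ y ∈ connectedComponentIn Γᶜ y₀ \ χ,
          connectedComponentIn (connectedComponentIn Γᶜ y₀ \ χ) y = V₁ ∨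
          connectedComponentIn (connectedComponentIn Γᶜ y₀ \ χ) y = V₂ := by
  obtain ⟨f, hf, -, rfl⟩ := hΓ
  obtain ⟨g, hg, hginj, rfl, hg0, hg1, hgΓ⟩ := hχ
  have : PreconnectedSpace (Metric.sphere (0 : EuclideanSpace ℝ (Fin 2)) 1) :=
    Subtype.preconnectedSpace (isPreconnected_sphere (by simp [← Module.finrank_eq_rank]) 0 1)
  exact chord_divides_residual_domain_general (by simp) (isCompact_range hf)
    (isPreconnected_range hf) ⟨hg, hginj, hg0, hg1, hgΓ⟩
end
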